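/- arXiv:1201.6330 — 3 statements merged into one kernel-verified Lean document; each statement's English description precedes it below -/
import Mathlib

section
/- Let G be a finite simple graph, C a longest cycle in G, and P a longest path in G \ C with endpoints x and y and length p ≥ 2. If x and y each have at least 2 neighbors on C and N_C(x) ≠ N_C(y), then |C| ≥ max{2p + 8, 4δ(G) − 2p}. -/
/-! Both ends of `P` send edges to `C`. Replacing an arc of `C` by a detour through `P` (or
through one end of `P`) cannot lengthen `C`. Hence an arc from a neighbour of `x` to a neighbour
of `y`, or conversely, has length at least `p + 2` (`gap_le`), and two neighbours of the same end
are never consecutive on `C`.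

Index `C` by `ZMod n`, with `n = |C|`, and let `X`, `Y` be the index sets of `N_C(x)`, `N_C(y)`,
`m = |X ∩ Y|` and `s = |X ∪ Y|`. If `L` of the `s` arcs cut out by `X ∪ Y` have length at least
`p + 2`, then `n ≥ 2 s + p L` (`sum_gap_le`). Every arc starting in `X ∩ Y` is of this kind, and so
is the arc starting at the last element of `X \ Y` before an element of `Y` (`exists_long`), and
likewise with `X` and `Y` exchanged. So `L ≥ m + 2` when neither of `X`, `Y` contains the other, and `L ≥ m + 1`
when they are nested (and different).
As `P` is longest, all neighbours of `x` outside `C` lie on `P`, so `|X| ≥ δ - p`, and likewise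
`|Y| ≥ δ - p` (`degree_le`). With `s = |X| + |Y| - m` both bounds follow by arithmetic; in the
nested case one uses `m = min |X| |Y| ≥ δ - p` and `s ≥ m + 1`. -/

open SimpleGraph Finset

namespace Paper

variable {V : Type*}

/-- Number of connected components of `G` after deleting the vertex set `S`. -/
noncomputable def compCount (G : SimpleGraph V) (S : Set V) : ℕ :=
  Nat.card ((G.induce Sᶜ).ConnectedComponent)

/-- `G` is 1-tough: every cutset `S` satisfies `|S| ≥ s(G \ S)`. -/
def OneTough [Fintype V] (G : SimpleGraph V) : Prop :=
  ∀ S : Finset V, 1 < compCount G ↑S → compCount G ↑S ≤ S.card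

/-- The toughness of `G` equals 1. -/
def ToughnessEqOne [Fintype V] (G : SimpleGraph V) : Prop :=
  OneTough G ∧ ∃ S : Finset V, 1 < compCount G ↑S ∧ compCount G ↑S = S.card

/-- The vertex connectivity of `G` equals 2. -/
def ConnectivityEqTwo [Fintype V] (G : SimpleGraph V) : Prop :=
  (∀ S : Finset V, S.card ≤ 1 → (G.induce (↑S : Set V)ᶜ).Connected) ∧
  ∃ S : Finset V, S.card = 2 ∧ ¬ (G.induce (↑S : Set V)ᶜ).Connected

/-- `G` is 3-connected: it stays connected after removing any 2 vertices. -/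
def ThreeConnected [Fintype V] (G : SimpleGraph V) : Prop :=
  ∀ S : Finset V, S.card ≤ 2 → (G.induce (↑S : Set V)ᶜ).Connected

/-- `c` is a longest cycle of `G`. -/
def IsLongestCycle {G : SimpleGraph V} {u : V} (c : G.Walk u u) : Prop :=
  c.IsCycle ∧ ∀ (v : V) (d : G.Walk v v), d.IsCycle → d.length ≤ c.length

/-- The cycle `c` is dominating: `G \ V(c)` is edgeless. -/
def IsDominating {G : SimpleGraph V} {u : V} (c : G.Walk u u) : Prop :=
  ∀ a b : V, G.Adj a b → a ∈ c.support ∨ b ∈ c.support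

/-- The walk `p` avoids all vertices of the cycle `c`. -/
def AvoidsCycle {G : SimpleGraph V} {u x y : V} (c : G.Walk u u) (p : G.Walk x y) : Prop :=
  ∀ v ∈ p.support, v ∉ c.support

/-- `p` is a longest path of `G \ V(c)`. -/
def IsLongestPathOutside {G : SimpleGraph V} {u x y : V} (c : G.Walk u u)
    (p : G.Walk x y) : Prop :=
  p.IsPath ∧ AvoidsCycle c p ∧
  ∀ (a b : V) (q : G.Walk a b), q.IsPath → AvoidsCycle c q → q.length ≤ p.length

/-- `N_C(x)`: the neighbors of `x` lying on the cycle `c`. -/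
def NC [Fintype V] [DecidableEq V] (G : SimpleGraph V) [DecidableRel G.Adj]
    {u : V} (c : G.Walk u u) (x : V) : Finset V :=
  (G.neighborFinset x).filter (fun v => v ∈ c.support)

/-- The interior vertices of a segment (the walk minus its endpoints). -/
def interior {G : SimpleGraph V} {a b : V} (I : G.Walk a b) : Set V :=
  {v | v ∈ I.support ∧ v ≠ a ∧ v ≠ b}

/-- `I` is an elementary segment of the cycle `c` created by the attachment set `A`:
an arc of `c` between consecutive vertices of `A`. -/
def IsSegment {G : SimpleGraph V} {u : V} (c : G.Walk u u)
    (A : Finset V) {a b : V} (I : G.Walk a b) : Prop :=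
  I.IsPath ∧ 1 ≤ I.length ∧ a ∈ A ∧ b ∈ A ∧
  (∀ v ∈ I.support, v ∈ c.support) ∧
  (∀ e ∈ I.edges, e ∈ c.edges) ∧
  ∀ v ∈ interior I, v ∉ A

/-- `L` is an intermediate path between the elementary segments `Ia` and `Ib`:
it joins interior vertices of `Ia` and `Ib` and is internally disjoint from `c ∪ P`. -/
def IsIntermediatePath {G : SimpleGraph V} {u x y : V} (c : G.Walk u u) (P : G.Walk x y)
    {a b a' b' z w : V} (Ia : G.Walk a b) (Ib : G.Walk a' b') (L : G.Walk z w) : Prop :=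
  L.IsPath ∧ 1 ≤ L.length ∧ z ∈ interior Ia ∧ w ∈ interior Ib ∧
  ∀ v ∈ L.support, (v ∈ c.support ∨ v ∈ P.support) → v = z ∨ v = w

/-- Membership in the exceptional class `𝔉₁`. -/
def InF1 [Fintype V] (H : SimpleGraph V) [DecidableRel H.Adj] (d : ℕ) : Prop :=
  ∃ (x y₁ y₂ y₃ : V) (A : Fin 3 → Set V),
    (∀ i j, i ≠ j → A i ∩ A j = {x}) ∧
    (⋃ i, A i) = Set.univ ∧
    y₁ ∈ A 0 ∧ y₂ ∈ A 1 ∧ y₃ ∈ A 2 ∧ y₁ ≠ x ∧ y₂ ≠ x ∧ y₃ ≠ x ∧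
    H.Adj y₁ y₂ ∧ H.Adj y₂ y₃ ∧ H.Adj y₁ y₃ ∧
    (∀ a b : V, H.Adj a b → (∃ i, a ∈ A i ∧ b ∈ A i) ∨
      s(a, b) ∈ ({s(y₁, y₂), s(y₂, y₃), s(y₁, y₃)} : Set (Sym2 V))) ∧
    (∀ i, (H.induce (A i)).Connected) ∧
    Nat.card (A 0) = d + 1 ∧ Nat.card (A 1) = d + 1 ∧
    d + 1 ≤ Nat.card (A 2) ∧ Nat.card (A 2) ≤ d + 2 ∧
    H.minDegree = d ∧ 3 ≤ d

/-- Membership in the exceptional class `𝔉₂`. -/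
def InF2 [Fintype V] (H : SimpleGraph V) [DecidableRel H.Adj] : Prop :=
  ∃ (x z y₁ y₂ y₃ : V) (A : Fin 3 → Set V),
    (∀ i j, i ≠ j → A i ∩ A j = {x}) ∧
    ((⋃ i, A i) ∪ {z}) = Set.univ ∧ z ∉ ⋃ i, A i ∧
    y₁ ∈ A 0 ∧ y₂ ∈ A 1 ∧ y₃ ∈ A 2 ∧ y₁ ≠ x ∧ y₂ ≠ x ∧ y₃ ≠ x ∧
    H.Adj z y₁ ∧ H.Adj z y₂ ∧ H.Adj z y₃ ∧ H.Adj y₁ y₂ ∧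
    (∀ a b : V, H.Adj a b → (∃ i, a ∈ A i ∧ b ∈ A i) ∨
      s(a, b) ∈ ({s(z, y₁), s(z, y₂), s(z, y₃), s(y₁, y₂), s(y₁, y₃), s(y₂, y₃),
        s(z, x)} : Set (Sym2 V))) ∧
    (∀ i, Nat.card (A i) = 4) ∧ H.minDegree = 3

/-- Membership in the exceptional class `𝔉₃`. -/
def InF3 [Fintype V] (H : SimpleGraph V) [DecidableRel H.Adj] : Prop :=
  ∃ (x z y₁ y₂ y₃ : V) (A : Fin 3 → Set V),
    (∀ i j, i ≠ j → A i ∩ A j = {x}) ∧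
    ((⋃ i, A i) ∪ {z}) = Set.univ ∧ z ∉ ⋃ i, A i ∧
    y₁ ∈ A 0 ∧ y₂ ∈ A 1 ∧ y₃ ∈ A 2 ∧ y₁ ≠ x ∧ y₂ ≠ x ∧ y₃ ≠ x ∧
    H.Adj z y₁ ∧ H.Adj z y₂ ∧ H.Adj z y₃ ∧ H.Adj z x ∧ H.Adj y₁ y₂ ∧
    (∀ a b : V, H.Adj a b → (∃ i, a ∈ A i ∧ b ∈ A i) ∨
      s(a, b) ∈ ({s(z, y₁), s(z, y₂), s(z, y₃), s(z, x), s(y₁, y₂), s(y₁, y₃),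
        s(y₂, y₃)} : Set (Sym2 V))) ∧
    (∀ i, Nat.card (A i) = 5) ∧ H.minDegree = 4

/-- Membership in the exceptional class `𝔉₄`. -/
def InF4 [Fintype V] (H : SimpleGraph V) [DecidableRel H.Adj] : Prop :=
  ∃ (x y : V) (z : Fin 4 → V) (A : Fin 4 → Set V),
    x ≠ y ∧
    (∀ i j, i ≠ j → A i ∩ A j = {x, y}) ∧
    (⋃ i, A i) = Set.univ ∧
    (∀ i, z i ∈ A i ∧ z i ≠ x ∧ z i ≠ y) ∧
    H.Adj (z 0) (z 1) ∧ H.Adj (z 1) (z 2) ∧ H.Adj (z 0) (z 2) ∧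
    (∀ a b : V, H.Adj a b → (∃ i, a ∈ A i ∧ b ∈ A i) ∨
      s(a, b) ∈ ({s(z 0, z 1), s(z 1, z 2), s(z 0, z 2)} : Set (Sym2 V))) ∧
    (∀ i, Nat.card (A i) = 5) ∧ H.minDegree = 4

/-! ### Packing arcs in a cyclic group -/

/-- If every `j ∈ A` is at cyclic distance at least `g j` from the other elements of `A`
that follow it, then the arcs `j, j + 1, …, j + g j - 1` are pairwise disjoint. -/
lemma sum_gap_le {n : ℕ} [NeZero n] (A : Finset (ZMod n)) (hA : 2 ≤ A.card) (g : ZMod n → ℕ)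
    (hg : ∀ j ∈ A, ∀ k : ℕ, 1 ≤ k → k < n → j + (k : ZMod n) ∈ A → g j ≤ k) :
    ∑ j ∈ A, g j ≤ n := by
  have hlt : ∀ j ∈ A, g j < n := by
    intro j hj
    obtain ⟨i, hi, hij⟩ := Finset.exists_mem_ne (by omega : 1 < A.card) j
    have h0 : (i - j).val ≠ 0 := by
      rw [Ne, ZMod.val_eq_zero, sub_eq_zero]; exact hij
    have h1 := ZMod.val_lt (i - j)
    have := hg j hj (i - j).val (by omega) h1 (by simpa using hi)
    omega
  have key : ∀ j ∈ A, ∀ j' ∈ A, ∀ t t' : ℕ, t < g j → t' < g j' → t ≤ t' →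
      j + (t : ZMod n) = j' + (t' : ZMod n) → j = j' ∧ t = t' := by
    intro j hj j' hj' t t' ht ht' hle h
    have hjj : j = j' + ((t' - t : ℕ) : ZMod n) := by
      rw [Nat.cast_sub hle]
      linear_combination h
    by_cases h0 : t' - t = 0
    · refine ⟨by simpa [h0] using hjj, by omega⟩
    · have := hlt j' hj'
      have := hg j' hj' (t' - t) (by omega) (by omega) (hjj ▸ hj)
      omega
  calc ∑ j ∈ A, g j = (A.sigma fun j => Finset.range (g j)).card := by simp
    _ ≤ (Finset.univ : Finset (ZMod n)).card := by
        refine Finset.card_le_card_of_injOn (fun q => q.1 + (q.2 : ZMod n)) (by simp) ?_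
        rintro ⟨j, t⟩ h1 ⟨j', t'⟩ h2 h
        simp only [Finset.coe_sigma, Set.mem_sigma_iff, Finset.mem_coe, Finset.mem_range]
          at h1 h2 h
        rcases le_total t t' with hle | hle
        · obtain ⟨rfl, rfl⟩ := key j h1.1 j' h2.1 t t' h1.2 h2.2 hle h
          rfl
        · obtain ⟨rfl, rfl⟩ := key j' h2.1 j h1.1 t' t h2.2 h1.2 hle h.symm
          rfl
    _ = n := by simp [ZMod.card]

/-- `j` is long when the next element of `A` after `j` is at cyclic distance at least
`p + 2`. -/
def Long {n : ℕ} (p : ℕ) (A : Finset (ZMod n)) (j : ZMod n) : Prop :=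
  ∀ k : ℕ, 1 ≤ k → k < n → j + (k : ZMod n) ∈ A → p + 2 ≤ k

/-- Walking forward from `X \ Y` to `Y`, the last element of `X \ Y` met on the way is long. -/
lemma exists_long {n : ℕ} [NeZero n] (p : ℕ) (X Y : Finset (ZMod n))
    (hXY : ∀ i ∈ X, ∀ k : ℕ, 1 ≤ k → k < n → i + (k : ZMod n) ∈ Y → p + 2 ≤ k)
    (h1 : (X \ Y).Nonempty) (h2 : Y.Nonempty) :
    ∃ j ∈ X \ Y, Long p (X ∪ Y) j := by
  obtain ⟨b, hb⟩ := h2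
  obtain ⟨j₀, hj₀⟩ := h1
  obtain ⟨j, hj, hmin⟩ := Finset.exists_min_image (X \ Y) (fun j => (b - j).val) ⟨j₀, hj₀⟩
  refine ⟨j, hj, ?_⟩
  intro k hk1 hkn hk
  by_contra hlt
  have hjX := (Finset.mem_sdiff.1 hj).1
  have hjY := (Finset.mem_sdiff.1 hj).2
  have hkY : j + (k : ZMod n) ∉ Y := fun h => hlt (hXY j hjX k hk1 hkn h)
  have hkX : j + (k : ZMod n) ∈ X \ Y :=
    Finset.mem_sdiff.2 ⟨(Finset.mem_union.1 hk).resolve_right hkY, hkY⟩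
  have hd0 : (b - j).val ≠ 0 := by
    rw [Ne, ZMod.val_eq_zero, sub_eq_zero]; rintro rfl; exact hjY hb
  have hdn := ZMod.val_lt (b - j)
  have hd := hXY j hjX (b - j).val (by omega) hdn (by simpa using hb)
  have hm := hmin _ hkX
  have : (b - (j + (k : ZMod n))) = (((b - j).val - k : ℕ) : ZMod n) := by
    rw [Nat.cast_sub (by omega)]
    simp; ring
  simp only [this] at hm
  rw [ZMod.val_natCast, Nat.mod_eq_of_lt (by omega)] at hm
  omega

/-- The counting inequality behind the theorem, for the index sets `X`, `Y` of the neighbours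
of the two ends of the path on a cycle of length `n`; `d` is the minimum degree. -/
lemma count {n : ℕ} [NeZero n] (p d : ℕ) (X Y : Finset (ZMod n)) (hp : 2 ≤ p)
    (hXX : ∀ i ∈ X, ∀ k : ℕ, 1 ≤ k → k < n → i + (k : ZMod n) ∈ X → 2 ≤ k)
    (hYY : ∀ i ∈ Y, ∀ k : ℕ, 1 ≤ k → k < n → i + (k : ZMod n) ∈ Y → 2 ≤ k)
    (hXY : ∀ i ∈ X, ∀ k : ℕ, 1 ≤ k → k < n → i + (k : ZMod n) ∈ Y → p + 2 ≤ k)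
    (hYX : ∀ i ∈ Y, ∀ k : ℕ, 1 ≤ k → k < n → i + (k : ZMod n) ∈ X → p + 2 ≤ k)
    (hX : 2 ≤ X.card) (hY : 2 ≤ Y.card) (hne : X ≠ Y)
    (hdX : d ≤ X.card + p) (hdY : d ≤ Y.card + p) :
    2 * p + 8 ≤ n ∧ 4 * d ≤ n + 2 * p := by
  classical
  set A := X ∪ Y with hA
  have hAX : X.card ≤ A.card := Finset.card_le_card Finset.subset_union_left
  have hsum : 2 * A.card + p * (A.filter (Long p A)).card ≤ n := by
    have := sum_gap_le A (by omega) (fun j => 2 + if Long p A j then p else 0) (by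
      intro j hj k hk1 hkn hk
      split_ifs with hL
      · have := hL k hk1 hkn hk
        omega
      · rcases Finset.mem_union.1 hj with hj | hj <;> rcases Finset.mem_union.1 hk with hk | hk
        · exact hXX j hj k hk1 hkn hk
        · have := hXY j hj k hk1 hkn hk; omega
        · have := hYX j hj k hk1 hkn hk; omega
        · exact hYY j hj k hk1 hkn hk)
    rw [Finset.sum_add_distrib, ← Finset.sum_filter] at this
    simpa [mul_comm] using this
  have hM : X ∩ Y ⊆ A.filter (Long p A) := by
    intro j hj
    have hj := Finset.mem_inter.1 hj
    refine Finset.mem_filter.2 ⟨Finset.mem_union_left _ hj.1, ?_⟩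
    intro k hk1 hkn hk
    rcases Finset.mem_union.1 hk with hk | hk
    · exact hYX j hj.2 k hk1 hkn hk
    · exact hXY j hj.1 k hk1 hkn hk
  have hYne : Y.Nonempty := Finset.card_pos.1 (by omega)
  have hXne : X.Nonempty := Finset.card_pos.1 (by omega)
  have hLX : (X \ Y).Nonempty → ∃ j ∈ X \ Y, j ∈ A.filter (Long p A) := fun h => by
    obtain ⟨j, hj, hL⟩ := exists_long p X Y hXY h hYne
    exact ⟨j, hj, Finset.mem_filter.2 ⟨Finset.mem_union_left _ (Finset.mem_sdiff.1 hj).1, hL⟩⟩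
  have hLY : (Y \ X).Nonempty → ∃ j ∈ Y \ X, j ∈ A.filter (Long p A) := fun h => by
    obtain ⟨j, hj, hL⟩ := exists_long p Y X hYX h hXne
    rw [Finset.union_comm] at hL
    exact ⟨j, hj, Finset.mem_filter.2 ⟨Finset.mem_union_right _ (Finset.mem_sdiff.1 hj).1, hL⟩⟩
  have hs : A.card + (X ∩ Y).card = X.card + Y.card := Finset.card_union_add_card_inter X Y
  have hcX : (X \ Y).card + (X ∩ Y).card = X.card := Finset.card_sdiff_add_card_inter X Y
  have hcY : (Y \ X).card + (X ∩ Y).card = Y.card := by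
    rw [Finset.inter_comm]; exact Finset.card_sdiff_add_card_inter Y X
  generalize hF : A.filter (Long p A) = F at *
  have hone : ∀ j, j ∈ F → j ∉ X ∩ Y → (X ∩ Y).card + 1 ≤ F.card := by
    intro j hj hjM
    rw [← Finset.card_insert_of_notMem hjM]
    exact Finset.card_le_card (Finset.insert_subset hj hM)
  generalize hm : (X ∩ Y).card = m at *
  rcases (X \ Y).eq_empty_or_nonempty with hXe | hXn <;>
    rcases (Y \ X).eq_empty_or_nonempty with hYe | hYn
  · exact absurd (Finset.Subset.antisymm (Finset.sdiff_eq_empty_iff_subset.1 hXe)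
      (Finset.sdiff_eq_empty_iff_subset.1 hYe)) hne
  · obtain ⟨j, hj, hjF⟩ := hLY hYn
    have hL := hone j hjF (by simp at hj ⊢; tauto)
    have := Finset.card_pos.2 hYn
    rw [hXe, Finset.card_empty] at hcX
    have hmul : p * (m + 1) ≤ p * F.card := Nat.mul_le_mul_left _ hL
    constructor <;> nlinarith
  · obtain ⟨j, hj, hjF⟩ := hLX hXn
    have hL := hone j hjF (by simp at hj ⊢; tauto)
    have := Finset.card_pos.2 hXn
    rw [hYe, Finset.card_empty] at hcY
    have hmul : p * (m + 1) ≤ p * F.card := Nat.mul_le_mul_left _ hL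
    constructor <;> nlinarith
  · obtain ⟨i, hi, hiF⟩ := hLX hXn
    obtain ⟨j, hj, hjF⟩ := hLY hYn
    have hL : m + 2 ≤ F.card := by
      have hjM : j ∉ X ∩ Y := by simp at hj ⊢; tauto
      have hiM : i ∉ insert j (X ∩ Y) := by
        have : i ≠ j := by rintro rfl; simp at hi hj; tauto
        simp at hi ⊢; tauto
      have hle := Finset.card_le_card
        (Finset.insert_subset hiF (Finset.insert_subset hjF hM))
      rw [Finset.card_insert_of_notMem hiM, Finset.card_insert_of_notMem hjM] at hle
      omega
    have := Finset.card_pos.2 hYn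
    have := Finset.card_pos.2 hXn
    have hmul : p * (m + 2) ≤ p * F.card := Nat.mul_le_mul_left _ hL
    have hpm : 2 * m ≤ p * m := Nat.mul_le_mul_right _ hp
    have hexp : p * (m + 2) = p * m + 2 * p := by ring
    constructor <;> omega

/-! ### Detours of a cycle through an outside path -/

/-- `h` runs around a cycle of length `n`; fewer than `n` steps along it form a path. -/
lemma exists_arc {G : SimpleGraph V} (n : ℕ) (h : ℕ → V) (hadj : ∀ i, G.Adj (h i) (h (i + 1)))
    (hinj : ∀ i k, 1 ≤ k → k < n → h i ≠ h (i + k)) (k : ℕ) (hk : k < n) (i : ℕ) :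
    ∃ W : G.Walk (h i) (h (i + k)), W.IsPath ∧ W.length = k ∧
      ∀ v ∈ W.support, ∃ t ≤ k, v = h (i + t) := by
  induction k generalizing i with
  | zero => exact ⟨.nil, by simp, rfl, by simp⟩
  | succ k ih =>
    obtain ⟨W, hW, hl, hs⟩ := ih (by omega) (i + 1)
    have e : h (i + 1 + k) = h (i + (k + 1)) := by congr 1; omega
    refine ⟨(Walk.cons (hadj i) W).copy rfl e, ?_, by simp [hl], ?_⟩
    · rw [Walk.isPath_copy, Walk.cons_isPath_iff]
      refine ⟨hW, fun hmem => ?_⟩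
      obtain ⟨t, ht, he⟩ := hs _ hmem
      exact hinj i (1 + t) (by omega) (by omega) (by rw [he]; congr 1; omega)
    · intro v hv
      rw [Walk.support_copy, Walk.support_cons, List.mem_cons] at hv
      rcases hv with rfl | hv
      · exact ⟨0, by omega, rfl⟩
      · obtain ⟨t, ht, rfl⟩ := hs _ hv
        exact ⟨t + 1, by omega, by congr 1; omega⟩

/-- Replacing the arc from `h i` to `h (i + k)` of a cycle by a path `Q` outside the cycle
gives a cycle of length `n - k + Q.length + 2`; it is at most `n` if no cycle is longer. -/
lemma gap_le {G : SimpleGraph V} (n : ℕ) (h : ℕ → V) (hadj : ∀ i, G.Adj (h i) (h (i + 1)))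
    (hinj : ∀ i k, 1 ≤ k → k < n → h i ≠ h (i + k)) (hper : ∀ i, h (i + n) = h i)
    (hmax : ∀ (v : V) (d : G.Walk v v), d.IsCycle → d.length ≤ n)
    {a b : V} (Q : G.Walk a b) (hQ : Q.IsPath) (hout : ∀ v ∈ Q.support, ∀ i, v ≠ h i)
    (i k : ℕ) (hk1 : 1 ≤ k) (hkn : k < n) (ha : G.Adj (h i) a) (hb : G.Adj b (h (i + k))) :
    Q.length + 2 ≤ k := by
  -- the complementary arc, from `h (i + k)` on to `h (i + n) = h i`
  obtain ⟨W, hW, hl, hs⟩ := exists_arc n h hadj hinj (n - k) (by omega) (i + k)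
  have e : h (i + k + (n - k)) = h i := by
    rw [← hper i]; congr 1; omega
  let R : G.Walk (h (i + k)) b := (W.copy rfl e).append (Walk.cons ha Q)
  have hRl : R.length = (n - k) + (Q.length + 1) := by simp [R, hl]
  have hR : R.IsPath := by
    rw [Walk.isPath_def, Walk.support_append, Walk.support_cons, List.tail_cons,
      Walk.support_copy]
    refine List.Nodup.append ((Walk.isPath_def _).1 hW) ((Walk.isPath_def _).1 hQ) ?_
    intro v hv hv'
    obtain ⟨t, -, rfl⟩ := hs v hv
    exact hout _ hv' _ rfl
  have hcyc : (Walk.cons hb R).IsCycle := by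
    rw [Walk.cons_isCycle_iff]
    refine ⟨hR, fun he => ?_⟩
    rw [Sym2.eq_swap] at he
    have := hR.length_eq_one_of_mem_edges he
    omega
  have := hmax _ _ hcyc
  rw [Walk.length_cons, hRl] at this
  omega

/-- All neighbours off the cycle of an end of a longest outside path lie on that path. -/
lemma degree_le [Fintype V] [DecidableEq V] (G : SimpleGraph V) [DecidableRel G.Adj]
    {u x y : V} (c : G.Walk u u) (P : G.Walk x y) (hP : IsLongestPathOutside c P) :
    G.degree x ≤ (NC G c x).card + P.length := by
  have hsub : G.neighborFinset x ⊆ NC G c x ∪ (P.support.toFinset.erase x) := by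
    intro v hv
    have hv' : G.Adj x v := by simpa using hv
    by_cases hvc : v ∈ c.support
    · exact Finset.mem_union_left _ (Finset.mem_filter.2 ⟨hv, hvc⟩)
    · refine Finset.mem_union_right _ (Finset.mem_erase.2 ⟨hv'.ne', ?_⟩)
      by_contra hvP
      rw [List.mem_toFinset] at hvP
      have := hP.2.2 v y (Walk.cons hv'.symm P)
        ((Walk.cons_isPath_iff _ _).2 ⟨hP.1, hvP⟩) (by
          intro w hw
          rw [Walk.support_cons, List.mem_cons] at hw
          rcases hw with rfl | hw
          · exact hvc
          · exact hP.2.1 w hw)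
      rw [Walk.length_cons] at this
      omega
  have h1 := (Finset.card_le_card hsub).trans (Finset.card_union_le _ _)
  rw [SimpleGraph.card_neighborFinset_eq_degree, Finset.card_erase_of_mem (by simp),
    List.toFinset_card_of_nodup ((Walk.isPath_def _).1 hP.1), Walk.length_support] at h1
  omega

theorem stmt_1 [Fintype V] [DecidableEq V] (G : SimpleGraph V) [DecidableRel G.Adj]
    {u x y : V} (c : G.Walk u u) (P : G.Walk x y)
    (hc : IsLongestCycle c) (hP : IsLongestPathOutside c P)
    (hp : 2 ≤ P.length)
    (hx : 2 ≤ (NC G c x).card) (hy : 2 ≤ (NC G c y).card)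
    (hne : NC G c x ≠ NC G c y) :
    max (2 * P.length + 8) (4 * G.minDegree - 2 * P.length) ≤ c.length := by
  obtain ⟨hcyc, hmax⟩ := hc
  have hPout := hP.2.1
  have hPr : IsLongestPathOutside c P.reverse :=
    ⟨hP.1.reverse, fun v hv => hPout v (by simpa using hv), fun a b q h1 h2 => by
      rw [Walk.length_reverse]; exact hP.2.2 a b q h1 h2⟩
  generalize hn : c.length = n at *
  have hn3 : 3 ≤ n := hn ▸ hcyc.three_le_length
  have : NeZero n := ⟨by omega⟩
  -- the cycle as an `n`-periodic sequence of vertices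
  let h : ℕ → V := fun i => c.getVert (i % n)
  have hper : ∀ i, h (i + n) = h i := fun i => by simp [h]
  have hmod : ∀ i, h (i % n) = h i := fun i => by simp [h]
  have hadj : ∀ i, G.Adj (h i) (h (i + 1)) := by
    intro i
    have hi : i % n < n := Nat.mod_lt _ (by omega)
    have h1 := c.adj_getVert_succ (i := i % n) (by omega)
    have h2 : c.getVert (i % n + 1) = c.getVert ((i + 1) % n) := by
      rw [Nat.add_mod, Nat.mod_eq_of_lt (by omega : 1 < n)]
      rcases Nat.lt_or_ge (i % n + 1) n with hlt | hge
      · rw [Nat.mod_eq_of_lt hlt]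
      · have : i % n + 1 = n := by omega
        rw [this, Nat.mod_self, Walk.getVert_zero, ← hn, Walk.getVert_length]
    simpa [h, ← h2] using h1
  have hinj' : ∀ i j, i < n → j < n → c.getVert i = c.getVert j → i = j := by
    intro i j hi hj hij
    exact hcyc.getVert_injOn' (by simp only [Set.mem_ofPred_eq]; omega)
      (by simp only [Set.mem_ofPred_eq]; omega) hij
  have hinj : ∀ i k, 1 ≤ k → k < n → h i ≠ h (i + k) := by
    intro i k hk1 hkn he
    have he := hinj' _ _ (Nat.mod_lt _ (by omega)) (Nat.mod_lt _ (by omega)) he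
    have : i + 0 ≡ i + k [MOD n] := he
    have := Nat.ModEq.add_left_cancel' i this
    rw [Nat.ModEq, Nat.zero_mod, Nat.mod_eq_of_lt hkn] at this
    omega
  have hmem : ∀ i, h i ∈ c.support := fun i => c.getVert_mem_support _
  have hsurj : ∀ v ∈ c.support, ∃ z : ZMod n, h z.val = v := by
    intro v hv
    obtain ⟨i, rfl, hi⟩ := Walk.mem_support_iff_exists_getVert.1 hv
    refine ⟨(i : ZMod n), ?_⟩
    rw [ZMod.val_natCast, hmod]
    rcases Nat.lt_or_ge i n with hlt | hge
    · simp [h, Nat.mod_eq_of_lt hlt]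
    · have : i = n := by omega
      subst this
      simp [h, ← hn]
  have hφinj : Function.Injective fun z : ZMod n => h z.val := by
    intro z w hzw
    have h1 := ZMod.val_lt z
    have h2 := ZMod.val_lt w
    simp only [h, Nat.mod_eq_of_lt h1, Nat.mod_eq_of_lt h2] at hzw
    exact ZMod.val_injective n (hinj' _ _ h1 h2 hzw)
  have hφadd : ∀ (z : ZMod n) (k : ℕ), h (z + (k : ZMod n)).val = h (z.val + k) := by
    intro z k
    rw [ZMod.val_add, ZMod.val_natCast, Nat.add_mod_mod, hmod]
  -- positions on the cycle of the neighbours of a vertex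
  let I : V → Finset (ZMod n) := fun v => Finset.univ.filter fun z => h z.val ∈ NC G c v
  have hI : ∀ v z, z ∈ I v ↔ G.Adj v (h z.val) := by
    intro v z
    simp [I, NC, hmem]
  have himg : ∀ v, (I v).image (fun z => h z.val) = NC G c v := by
    intro v
    ext w
    simp only [I, Finset.mem_image, Finset.mem_filter, Finset.mem_univ, true_and]
    constructor
    · rintro ⟨z, hz, rfl⟩; exact hz
    · intro hw
      obtain ⟨z, rfl⟩ := hsurj w (Finset.mem_filter.1 hw).2
      exact ⟨z, hw, rfl⟩
  have hcard : ∀ v, (I v).card = (NC G c v).card := fun v => by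
    rw [← himg v, Finset.card_image_of_injective _ hφinj]
  have hgap : ∀ {a b : V} (Q : G.Walk a b), Q.IsPath → AvoidsCycle c Q →
      ∀ i ∈ I a, ∀ k : ℕ, 1 ≤ k → k < n → i + (k : ZMod n) ∈ I b → Q.length + 2 ≤ k := by
    intro a b Q hQ hQo i hi k hk1 hkn hk
    rw [hI] at hi hk
    rw [hφadd] at hk
    exact gap_le n h hadj hinj hper hmax Q hQ (fun v hv j hj => hQo v hv (hj ▸ hmem j))
      i.val k hk1 hkn hi.symm hk
  have hself : ∀ v ∈ P.support, ∀ i ∈ I v, ∀ k : ℕ, 1 ≤ k → k < n →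
      i + (k : ZMod n) ∈ I v → 2 ≤ k := by
    intro v hv i hi k hk1 hkn hk
    simpa using hgap (Walk.nil : G.Walk v v) (by simp)
      (fun w hw => by simp at hw; exact hw ▸ hPout v hv) i hi k hk1 hkn hk
  have hYX := hgap P.reverse hPr.1 hPr.2.1
  rw [Walk.length_reverse] at hYX
  have hdx := (G.minDegree_le_degree x).trans (degree_le G c P hP)
  have hdy := (G.minDegree_le_degree y).trans (degree_le G c P.reverse hPr)
  rw [Walk.length_reverse] at hdy
  have hfin := count P.length G.minDegree (I x) (I y) hp
    (hself x P.start_mem_support) (hself y P.end_mem_support) (hgap P hP.1 hPout) hYX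
    (by rw [hcard]; exact hx) (by rw [hcard]; exact hy)
    (fun he => hne (by rw [← himg x, ← himg y, he]))
    (by rw [hcard]; exact hdx) (by rw [hcard]; exact hdy)
  rw [max_le_iff]
  omega
end Paper
end

section
/- Let G be a finite simple graph, C a longest cycle in G, and P a longest path in G \ C with endpoints x, y and length p ≥ 0. Suppose N_C(x) = N_C(y) and |N_C(x)| ≥ 2. Let I_a and I_b be two distinct elementary segments. If every intermediate path between I_a and I_b is a single edge and there are exactly i such edges for some i ∈ {1, 2, 3}, then |I_a| + |I_b| ≥ 2p + i + 5. -/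
/-!
Write the longest cycle as `f : ℤ → V`, periodic with period `n`, so that the two segments occupy
`[0, m]` and `[j, l]` with `m ≤ j` and `l ≤ n`. All four of their ends are adjacent to both ends of
`P`, whose length is `p`. Suppose that `f i` and `f k`, interior to the first and the second
segment, are adjacent. The cycle `x P y f(j) ↘ f(i) f(k) ↗ f(n) x` is not longer than `n`, whence
`i + (k - j) ≥ p + 3`; reversing the orientation, `(m - i) + (l - k) ≥ p + 3` (`Config.single`,
`Config.single'`). One edge therefore gives `m + (l - j) ≥ 2p + 6`.

Two edges sharing an end, with other ends at distance `d`, improve this to `2p + 6 + d`: take the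
first bound for one edge and the second bound for the other. So two edges with a common end give
`2p + 7`, and three give `2p + 8`. Two disjoint edges always give `2p + 8` (`Config.two_chords`). If
they meet the segments in the same order, the argument just made yields both gaps as a gain. If the
orders are opposite, a cycle through `P` and both edges bounds the length of the second segment
below by `p + 4` plus the difference of the gaps, and the symmetric cycle bounds the first by `p + 4`
minus that difference (`Config.double`, `Config.double'`). Three edges between two disjoint sets
either contain two disjoint ones or share an end.

Translating the hypotheses into positions rests on the fact that a path whose edges lie on a cycle
runs monotonically around it (`CycParam.exists_shift`).
-/

open SimpleGraph Finset

namespace Paper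

variable {V : Type*}

/-! ### Periodic parametrizations of a cycle -/

/-- `f : ℤ → V` runs around a cycle of length `n` of `G`: consecutive values are adjacent, and
`f` is periodic with period `n` and injective modulo `n`. -/
structure CycParam (G : SimpleGraph V) (n : ℕ) (f : ℤ → V) : Prop where
  adj : ∀ r, G.Adj (f r) (f (r + 1))
  per : ∀ r, f (r + n) = f r
  inj : ∀ r s, f r = f s → ∃ k : ℤ, r = s + k * n

namespace CycParam

variable {G : SimpleGraph V} {n : ℕ} {f : ℤ → V}

lemma per_mul (hf : CycParam G n f) (r k : ℤ) : f (r + k * n) = f r :=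
  (Function.Periodic.int_mul (f := f) (c := (n : ℤ)) hf.per k) r

lemma eq_of_lt (hf : CycParam G n f) {r s : ℤ} (h : f r = f s) (h1 : r - s < n)
    (h2 : s - r < n) : r = s := by
  obtain ⟨k, hk⟩ := hf.inj r s h
  have : r - s = 0 := Int.eq_zero_of_abs_lt_dvd (m := n) ⟨k, by rw [hk]; ring⟩
    (abs_lt.2 ⟨by omega, h1⟩)
  omega

lemma congr_add (hf : CycParam G n f) {r s : ℤ} (h : f r = f s) (t : ℤ) :
    f (r + t) = f (s + t) := by
  obtain ⟨k, rfl⟩ := hf.inj r s h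
  rw [show s + k * n + t = s + t + k * n by ring, hf.per_mul]

lemma shift (hf : CycParam G n f) (t : ℤ) : CycParam G n (fun r => f (r + t)) where
  adj r := by simpa [add_right_comm] using hf.adj (r + t)
  per r := by simpa [add_right_comm] using hf.per (r + t)
  inj r s h := by
    obtain ⟨k, hk⟩ := hf.inj _ _ h
    exact ⟨k, by linarith⟩

lemma reflect (hf : CycParam G n f) (t : ℤ) : CycParam G n (fun r => f (t - r)) where
  adj r := by
    have := (hf.adj (t - (r + 1))).symm
    rwa [show t - (r + 1) + 1 = t - r by ring] at this
  per r := by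
    have := hf.per (t - (r + n))
    rw [show t - (r + n) + n = t - r by ring] at this
    exact this.symm
  inj r s h := by
    obtain ⟨k, hk⟩ := hf.inj _ _ h
    exact ⟨-k, by linarith⟩

/-- The arc of `d < n` consecutive steps starting at position `s`, as a path. -/
lemma exists_arc (hf : CycParam G n f) (s : ℤ) (d : ℕ) (hd : d < n) :
    ∃ q : G.Walk (f s) (f (s + d)), q.IsPath ∧ q.length = d ∧
      ∀ v ∈ q.support, ∃ r, s ≤ r ∧ r ≤ s + d ∧ v = f r := by
  induction d generalizing s with
  | zero =>
    rw [show s + ((0 : ℕ) : ℤ) = s by simp]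
    exact ⟨Walk.nil, by simp, by simp, fun v hv => ⟨s, le_rfl, le_rfl, by simpa using hv⟩⟩
  | succ d ih =>
    obtain ⟨q, hq, hl, hs⟩ := ih (s + 1) (by omega)
    rw [show s + ((d + 1 : ℕ) : ℤ) = s + 1 + d by push_cast; ring]
    refine ⟨Walk.cons (hf.adj s) q, ?_, by simp [hl], ?_⟩
    · rw [Walk.cons_isPath_iff]
      refine ⟨hq, fun hmem => ?_⟩
      obtain ⟨r, h1, h2, h3⟩ := hs _ hmem
      have := hf.eq_of_lt h3 (by omega) (by omega)
      omega
    · intro v hv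
      rw [Walk.support_cons, List.mem_cons] at hv
      rcases hv with rfl | hv
      · exact ⟨s, by omega, by omega, rfl⟩
      · obtain ⟨r, h1, h2, h3⟩ := hs _ hv
        exact ⟨r, by omega, by omega, h3⟩

lemma exists_up (hf : CycParam G n f) {s t : ℤ} (h : s ≤ t) (hd : t - s < n) :
    ∃ q : G.Walk (f s) (f t), q.IsPath ∧ (q.length : ℤ) = t - s ∧
      ∀ v ∈ q.support, ∃ r, s ≤ r ∧ r ≤ t ∧ v = f r := by
  obtain ⟨d, hd'⟩ := Int.eq_ofNat_of_zero_le (show 0 ≤ t - s by omega)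
  obtain rfl : t = s + d := by omega
  obtain ⟨q, hq, hl, hs⟩ := hf.exists_arc s d (by omega)
  exact ⟨q, hq, by omega, hs⟩

lemma exists_down (hf : CycParam G n f) {s t : ℤ} (h : s ≤ t) (hd : t - s < n) :
    ∃ q : G.Walk (f t) (f s), q.IsPath ∧ (q.length : ℤ) = t - s ∧
      ∀ v ∈ q.support, ∃ r, s ≤ r ∧ r ≤ t ∧ v = f r := by
  obtain ⟨q, hq, hl, hs⟩ := hf.exists_up h hd
  exact ⟨q.reverse, hq.reverse, by simpa using hl, fun v hv => hs v (by simpa using hv)⟩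

/-- A path all of whose edges lie on the cycle runs monotonically around it. -/
lemma exists_shift (hf : CycParam G n f) {a b : V} (I : G.Walk a b) (hI : I.IsPath)
    (ha : ∃ r, a = f r) (he : ∀ e ∈ I.edges, ∃ r, e = s(f r, f (r + 1))) :
    ∃ s : ℤ, (∀ k : ℕ, k ≤ I.length → I.getVert k = f (s + k)) ∨
      (∀ k : ℕ, k ≤ I.length → I.getVert k = f (s - k)) := by
  induction I with
  | nil =>
    obtain ⟨r, hr⟩ := ha
    refine ⟨r, Or.inl fun k hk => ?_⟩
    simp only [Walk.length_nil, Nat.le_zero] at hk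
    subst hk
    simpa using hr
  | @cons a v b h p ih =>
    rw [Walk.cons_isPath_iff] at hI
    obtain ⟨r, hr⟩ := he s(a, v) (by simp)
    have hr' : (a = f r ∧ v = f (r + 1)) ∨ (a = f (r + 1) ∧ v = f r) := by
      simpa [Sym2.eq_iff] using hr
    have hv : ∃ r, v = f r := by
      rcases hr' with h | h
      exacts [⟨_, h.2⟩, ⟨_, h.2⟩]
    obtain ⟨s, hs⟩ := ih hI.1 hv (fun e hep => he e (by simp [hep]))
    -- the two neighbours of `v = f s` on the cycle are `f (s - 1)` and `f (s + 1)`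
    have hvs : v = f s := by
      rcases hs with hs | hs <;> simpa using hs 0 (Nat.zero_le _)
    have hab : a = f (s - 1) ∨ a = f (s + 1) := by
      rcases hr' with ⟨h1, h2⟩ | ⟨h1, h2⟩
      · left
        have := hf.congr_add (h2.symm.trans hvs) (-1)
        rwa [add_neg_cancel_right, ← sub_eq_add_neg, ← h1] at this
      · right
        rw [h1, hf.congr_add (h2.symm.trans hvs) 1]
    have hne : 1 ≤ p.length → p.getVert 1 ≠ a := fun _ h =>
      hI.2 (h ▸ p.getVert_mem_support 1)
    have up : (∀ k : ℕ, k ≤ p.length → p.getVert k = f (s + k)) → a = f (s - 1) →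
        ∀ k : ℕ, k ≤ (Walk.cons h p).length → (Walk.cons h p).getVert k = f (s - 1 + k) := by
      intro hs ha k hk
      cases k with
      | zero => simpa using ha
      | succ k =>
        rw [Walk.getVert_cons_succ, hs k (by simpa using hk)]
        congr 1; push_cast; ring
    have down : (∀ k : ℕ, k ≤ p.length → p.getVert k = f (s - k)) → a = f (s + 1) →
        ∀ k : ℕ, k ≤ (Walk.cons h p).length → (Walk.cons h p).getVert k = f (s + 1 - k) := by
      intro hs ha k hk
      cases k with
      | zero => simpa using ha
      | succ k =>
        rw [Walk.getVert_cons_succ, hs k (by simpa using hk)]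
        congr 1; push_cast; ring
    rcases hs with hs | hs <;> rcases hab with hab | hab
    · exact ⟨_, Or.inl (up hs hab)⟩
    · by_cases hl : 1 ≤ p.length
      · exact absurd ((hs 1 hl).trans (by simpa using hab.symm)) (hne hl)
      · refine ⟨_, Or.inr (down (fun k hk => ?_) hab)⟩
        obtain rfl : k = 0 := by omega
        simpa using hvs
    · by_cases hl : 1 ≤ p.length
      · exact absurd ((hs 1 hl).trans (by simpa using hab.symm)) (hne hl)
      · refine ⟨_, Or.inl (up (fun k hk => ?_) hab)⟩
        obtain rfl : k = 0 := by omega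
        simpa using hvs
    · exact ⟨_, Or.inr (down hs hab)⟩

/-- A path all of whose edges lie on the cycle is the set of positions `[s, s + I.length]`,
traversed in one direction or the other. -/
lemma exists_interval (hf : CycParam G n f) {a b : V} (I : G.Walk a b) (hI : I.IsPath)
    (ha : ∃ r, a = f r) (he : ∀ e ∈ I.edges, ∃ r, e = s(f r, f (r + 1))) (hn : 0 < n) :
    ∃ s : ℤ, I.length < n ∧
      ((a = f s ∧ b = f (s + I.length)) ∨ (a = f (s + I.length) ∧ b = f s)) ∧
      ∀ v, v ∈ interior I ↔ ∃ r, s < r ∧ r < s + I.length ∧ v = f r := by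
  obtain ⟨s, hs⟩ := hf.exists_shift I hI ha he
  have hlt : I.length < n := by
    by_contra hcon
    push Not at hcon
    have h0 : I.getVert n = I.getVert 0 := by
      rcases hs with hs | hs
      · rw [hs n hcon, hs 0 (Nat.zero_le _), hf.per]; simp
      · rw [hs n hcon, hs 0 (Nat.zero_le _), ← hf.per]; simp
    have := hI.getVert_injOn (x₁ := n) (x₂ := 0) hcon (Nat.zero_le _) h0
    omega
  have hint : ∀ v, v ∈ interior I ↔ ∃ k : ℕ, 0 < k ∧ k < I.length ∧ v = I.getVert k := by
    intro v
    constructor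
    · rintro ⟨h1, h2, h3⟩
      obtain ⟨k, hk, hkl⟩ := Walk.mem_support_iff_exists_getVert.1 h1
      refine ⟨k, Nat.pos_of_ne_zero ?_, lt_of_le_of_ne hkl ?_, hk.symm⟩
      · rintro rfl; exact h2 (by simpa using hk.symm)
      · rintro rfl; exact h3 (by simpa using hk.symm)
    · rintro ⟨k, h1, h2, rfl⟩
      refine ⟨I.getVert_mem_support k, fun h => ?_, fun h => ?_⟩
      · exact h1.ne' ((hI.getVert_eq_start_iff h2.le).1 h)
      · exact h2.ne ((hI.getVert_eq_end_iff h2.le).1 h)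
  rcases hs with hs | hs
  · refine ⟨s, hlt, Or.inl ⟨by simpa using hs 0 (Nat.zero_le _),
      by simpa using hs I.length le_rfl⟩, fun v => (hint v).trans ⟨?_, ?_⟩⟩
    · rintro ⟨k, h1, h2, rfl⟩
      exact ⟨s + k, by omega, by omega, hs k h2.le⟩
    · rintro ⟨r, h1, h2, rfl⟩
      refine ⟨(r - s).toNat, by omega, by omega, ?_⟩
      rw [hs _ (by omega)]
      congr 1; omega
  · refine ⟨s - I.length, hlt, Or.inr ⟨by simpa using hs 0 (Nat.zero_le _),
      by simpa using hs I.length le_rfl⟩, fun v => (hint v).trans ⟨?_, ?_⟩⟩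
    · rintro ⟨k, h1, h2, rfl⟩
      exact ⟨s - k, by omega, by omega, hs k h2.le⟩
    · rintro ⟨r, h1, h2, rfl⟩
      refine ⟨(s - r).toNat, by omega, by omega, ?_⟩
      rw [hs _ (by omega)]
      congr 1; omega

end CycParam

/-- Every cycle, as a walk, has a periodic parametrization with the same vertices whose steps
include all its edges. -/
lemma exists_cycParam {G : SimpleGraph V} {u : V} (c : G.Walk u u) (hc : c.IsCycle) :
    ∃ f : ℤ → V, CycParam G c.length f ∧ (∀ v, v ∈ c.support ↔ ∃ r, v = f r) ∧
      ∀ e ∈ c.edges, ∃ r, e = s(f r, f (r + 1)) := by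
  have h3 := hc.three_le_length
  have hn : (0 : ℤ) < c.length := by omega
  have hnn := fun r : ℤ => Int.emod_nonneg r hn.ne'
  have hlt := fun r : ℤ => Int.emod_lt_of_pos r hn
  -- the successor of position `r` is `(r % n) + 1`, the value `n` being a second name for `0`
  have hsucc : ∀ r : ℤ, c.getVert ((r + 1) % c.length).toNat =
      c.getVert ((r % c.length).toNat + 1) := by
    intro r
    have h1 := hnn r
    have h2 := hlt r
    rcases eq_or_ne (r % c.length + 1) (c.length : ℤ) with h | h
    · have : (r + 1) % c.length = 0 := by
        rw [← Int.emod_add_emod, h, Int.emod_self]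
      rw [this, show (r % c.length).toNat + 1 = c.length by omega]
      simp
    · have : (r + 1) % c.length = r % c.length + 1 := by
        rw [← Int.emod_add_emod, Int.emod_eq_of_lt (by omega) (by omega)]
      rw [this, show (r % (c.length : ℤ) + 1).toNat = (r % c.length).toNat + 1 by omega]
  have hnat : ∀ i : ℕ, i < c.length → ((i : ℤ) % c.length).toNat = i := by
    intro i hi
    rw [Int.emod_eq_of_lt (by omega) (by omega)]
    simp
  refine ⟨fun r => c.getVert (r % c.length).toNat, ⟨fun r => ?_, fun r => ?_, ?_⟩, ?_, ?_⟩
  · have h1 := hnn r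
    have h2 := hlt r
    simp only [hsucc]
    exact c.adj_getVert_succ (by omega)
  · simp
  · intro r s h
    have h1 := hnn r
    have h2 := hlt r
    have h3 := hnn s
    have h4 := hlt s
    have := hc.getVert_injOn' (x₁ := (r % c.length).toNat) (x₂ := (s % c.length).toNat)
      (by simp only [Set.mem_ofPred_eq]; omega) (by simp only [Set.mem_ofPred_eq]; omega) h
    refine ⟨r / c.length - s / c.length, ?_⟩
    have e1 := Int.mul_ediv_add_emod r c.length
    have e2 := Int.mul_ediv_add_emod s c.length
    have e3 : r % c.length = s % c.length := by omega
    linear_combination -e1 + e2 + e3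
  · intro v
    constructor
    · intro hv
      obtain ⟨k, hk, hkl⟩ := Walk.mem_support_iff_exists_getVert.1 hv
      rcases hkl.lt_or_eq with h | rfl
      · exact ⟨k, by simp only [hnat k h, hk]⟩
      · exact ⟨0, by simpa using hk.symm⟩
    · rintro ⟨r, rfl⟩
      exact c.getVert_mem_support _
  · intro e
    induction e with
    | _ v w =>
      intro he
      obtain ⟨k, hk, hkl⟩ := c.mk_mem_edges_iff_exists.1 he
      exact ⟨k, by simp only [hsucc, hnat k hk, hkl]⟩

/-! ### Rerouting the cycle through a path outside it -/

lemma exists_join {G : SimpleGraph V} {u v w t : V} {p : G.Walk u v} {q : G.Walk w t}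
    (hp : p.IsPath) (hq : q.IsPath) (h : G.Adj v w)
    (hd : ∀ z ∈ p.support, z ∉ q.support) :
    ∃ D : G.Walk u t, D.IsPath ∧ D.length = p.length + q.length + 1 ∧
      ∀ z ∈ D.support, z ∈ p.support ∨ z ∈ q.support := by
  refine ⟨p.append (Walk.cons h q), ?_, by simp [add_assoc], ?_⟩
  · rw [Walk.isPath_def, Walk.support_append, Walk.support_cons, List.tail_cons,
      List.nodup_append']
    exact ⟨hp.support_nodup, hq.support_nodup, fun z h1 h2 => hd z h1 h2⟩
  · intro z hz
    rw [Walk.support_append, Walk.support_cons, List.tail_cons, List.mem_append] at hz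
    exact hz

/-- Two arcs `[0, m]` and `[j, l]` of a longest cycle `f` of length `n`, with disjoint interiors,
whose four ends are adjacent to both ends of a path `P` that avoids the cycle. The maximality of
the cycle is expressed by `max`: closing up a path of length at least `2` never gives a cycle of
more than `n` edges. -/
structure Config (G : SimpleGraph V) (n : ℕ) (f : ℤ → V) {x y : V} (P : G.Walk x y)
    (m j l : ℤ) : Prop where
  cyc : CycParam G n f
  path : P.IsPath
  avoid : ∀ r, f r ∉ P.support
  max : ∀ (s t : V) (D : G.Walk s t), D.IsPath → 2 ≤ D.length → G.Adj t s → D.length + 1 ≤ n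
  pos : 0 < m
  le : m ≤ j
  lt : j < l
  le' : l ≤ n
  adj : ∀ r, r = 0 ∨ r = m ∨ r = j ∨ r = l → G.Adj x (f r) ∧ G.Adj y (f r)

namespace Config

variable {G : SimpleGraph V} {n : ℕ} {f : ℤ → V} {x y : V} {P : G.Walk x y} {m j l : ℤ}

/-- Reversing the orientation of the cycle. -/
lemma reflect (h : Config G n f P m j l) :
    Config G n (fun r => f (m - r)) P m (n + m - l) (n + m - j) := by
  have hper : ∀ r : ℤ, f (r - n) = f r := fun r => by
    rw [← h.cyc.per (r - n), sub_add_cancel]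
  refine ⟨h.cyc.reflect m, h.path, fun r => h.avoid _, h.max, h.pos, ?_, ?_, ?_, ?_⟩
  · linarith [h.le']
  · linarith [h.lt]
  · linarith [h.le]
  · rintro r (rfl | rfl | rfl | rfl)
    · simpa using h.adj m (by simp)
    · simpa using h.adj 0 (by simp)
    · simpa [show m - (n + m - l) = l - n by ring, hper] using h.adj l (by simp)
    · simpa [show m - (n + m - j) = j - n by ring, hper] using h.adj j (by simp)

/-- Exchanging the roles of the two arcs. -/
lemma swap (h : Config G n f P m j l) :
    Config G n (fun r => f (r + j)) P (l - j) (n - j) (n - j + m) := by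
  refine ⟨h.cyc.shift j, h.path, fun r => h.avoid _, h.max, ?_, ?_, ?_, ?_, ?_⟩
  · linarith [h.lt]
  · linarith [h.le']
  · linarith [h.pos]
  · linarith [h.le]
  · rintro r (rfl | rfl | rfl | rfl)
    · simpa using h.adj j (by simp)
    · simpa using h.adj l (by simp)
    · have h0 : f n = f 0 := by simpa using h.cyc.per 0
      simpa [h0] using h.adj 0 (by simp)
    · simpa [show (n : ℤ) - j + m + j = m + n by ring, h.cyc.per] using h.adj m (by simp)

/-- The bound given by the cycle `x P y f(j) ↘ f(i) f(k) ↗ f(n) x`, which skips `[0, i]` and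
`[j, k]`. -/
lemma single (h : Config G n f P m j l) {i k : ℤ} (hi : 0 < i) (him : i < m) (hk : j < k)
    (hkl : k < l) (e : G.Adj (f i) (f k)) : (P.length : ℤ) + 3 ≤ i + (k - j) := by
  have h1 := h.le
  have h2 := h.le'
  obtain ⟨q, hq, hql, hqs⟩ := h.cyc.exists_down (s := i) (t := j) (by omega) (by omega)
  obtain ⟨q', hq', hql', hqs'⟩ := h.cyc.exists_up (s := k) (t := n) (by omega) (by omega)
  obtain ⟨D, hD, hDl, hDs⟩ := exists_join hq hq' e fun z hz hz' => by
    obtain ⟨r, h1, h2, rfl⟩ := hqs z hz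
    obtain ⟨s, h3, h4, h5⟩ := hqs' _ hz'
    have := h.cyc.eq_of_lt h5 (by omega) (by omega)
    omega
  obtain ⟨E, hE, hEl, -⟩ := exists_join h.path hD (h.adj j (by simp)).2 fun z hz hz' => by
    rcases hDs z hz' with hz' | hz'
    · obtain ⟨r, -, -, rfl⟩ := hqs z hz'; exact h.avoid r hz
    · obtain ⟨r, -, -, rfl⟩ := hqs' z hz'; exact h.avoid r hz
  have hx : G.Adj (f n) x := by
    have h0 : f n = f 0 := by simpa using h.cyc.per 0
    rw [h0]
    exact (h.adj 0 (by simp)).1.symm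
  have := h.max _ _ E hE (by omega) hx
  omega

/-- `single` for the reversed orientation. -/
lemma single' (h : Config G n f P m j l) {i k : ℤ} (hi : 0 < i) (him : i < m) (hk : j < k)
    (hkl : k < l) (e : G.Adj (f i) (f k)) : (P.length : ℤ) + 3 ≤ (m - i) + (l - k) := by
  have := h.reflect.single (i := m - i) (k := n + m - k) (by omega) (by omega) (by omega)
    (by omega) (by
      have hk := h.cyc.per (k - n)
      rw [sub_add_cancel] at hk
      simpa [show m - (n + m - k) = k - n by ring, ← hk] using e)
  omega

/-- The bound given by the cycle `x P y f(l) ↗ f(n + i₁) f(k₁) ↘ f(k₂) f(i₂) ↗ f(j) x`, which uses both of two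
edges joining the arcs in opposite order. -/
lemma double (h : Config G n f P m j l) {i₁ k₁ i₂ k₂ : ℤ} (hi : 0 < i₁) (hii : i₁ < i₂)
    (him : i₂ < m) (hk : j < k₂) (hkk : k₂ < k₁) (hkl : k₁ < l) (e₁ : G.Adj (f i₁) (f k₁))
    (e₂ : G.Adj (f i₂) (f k₂)) :
    (P.length : ℤ) + 4 + (k₁ - k₂) ≤ (l - j) + (i₂ - i₁) := by
  have h1 := h.le
  have h2 := h.le'
  obtain ⟨q₁, hq₁, hl₁, hs₁⟩ := h.cyc.exists_up (s := l) (t := i₁ + n) (by omega) (by omega)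
  obtain ⟨q₂, hq₂, hl₂, hs₂⟩ := h.cyc.exists_down (s := k₂) (t := k₁) (by omega) (by omega)
  obtain ⟨q₃, hq₃, hl₃, hs₃⟩ := h.cyc.exists_up (s := i₂) (t := j) (by omega) (by omega)
  obtain ⟨D, hD, hDl, hDs⟩ := exists_join hq₂ hq₃ e₂.symm fun z hz hz' => by
    obtain ⟨r, h1, h2, rfl⟩ := hs₂ z hz
    obtain ⟨s, h3, h4, h5⟩ := hs₃ _ hz'
    have := h.cyc.eq_of_lt h5 (by omega) (by omega)
    omega
  obtain ⟨E, hE, hEl, hEs⟩ := exists_join hq₁ hD (by rwa [h.cyc.per]) fun z hz hz' => by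
    obtain ⟨r, h1, h2, rfl⟩ := hs₁ z hz
    rcases hDs _ hz' with hz' | hz'
    · obtain ⟨s, h3, h4, h5⟩ := hs₂ _ hz'
      have := h.cyc.eq_of_lt h5 (by omega) (by omega)
      omega
    · obtain ⟨s, h3, h4, h5⟩ := hs₃ _ hz'
      have := h.cyc.eq_of_lt h5 (by omega) (by omega)
      omega
  obtain ⟨F, hF, hFl, -⟩ := exists_join h.path hE (h.adj l (by simp)).2 fun z hz hz' => by
    rcases hEs z hz' with hz' | hz'
    · obtain ⟨r, -, -, rfl⟩ := hs₁ z hz'; exact h.avoid r hz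
    rcases hDs z hz' with hz' | hz'
    · obtain ⟨r, -, -, rfl⟩ := hs₂ z hz'; exact h.avoid r hz
    · obtain ⟨r, -, -, rfl⟩ := hs₃ z hz'; exact h.avoid r hz
  have := h.max _ _ F hF (by omega) (h.adj j (by simp)).1.symm
  omega

/-- `double` for the exchanged arcs. -/
lemma double' (h : Config G n f P m j l) {i₁ k₁ i₂ k₂ : ℤ} (hi : 0 < i₁) (hii : i₁ < i₂)
    (him : i₂ < m) (hk : j < k₂) (hkk : k₂ < k₁) (hkl : k₁ < l) (e₁ : G.Adj (f i₁) (f k₁))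
    (e₂ : G.Adj (f i₂) (f k₂)) :
    (P.length : ℤ) + 4 + (i₂ - i₁) ≤ m + (k₁ - k₂) := by
  have := h.swap.double (i₁ := k₂ - j) (k₁ := n - j + i₂) (i₂ := k₁ - j) (k₂ := n - j + i₁)
    (by omega) (by omega) (by omega) (by omega) (by omega) (by omega)
    (by simpa [show (n : ℤ) - j + i₂ + j = i₂ + n by ring, h.cyc.per] using e₂.symm)
    (by simpa [show (n : ℤ) - j + i₁ + j = i₁ + n by ring, h.cyc.per] using e₁.symm)
  omega

/-- `e` is the pair `(i, k)` of positions of the ends of an edge joining the interiors of the two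
arcs. -/
def IsChord (G : SimpleGraph V) (f : ℤ → V) (m j l : ℤ) (e : ℤ × ℤ) : Prop :=
  0 < e.1 ∧ e.1 < m ∧ j < e.2 ∧ e.2 < l ∧ G.Adj (f e.1) (f e.2)

/-- Each of the two reroutings of the cycle through `P` and one edge gives a bound. -/
lemma one_chord (h : Config G n f P m j l) {e : ℤ × ℤ} (he : IsChord G f m j l e) :
    (P.length : ℤ) + 3 ≤ e.1 + (e.2 - j) ∧ (P.length : ℤ) + 3 ≤ (m - e.1) + (l - e.2) :=
  ⟨h.single he.1 he.2.1 he.2.2.1 he.2.2.2.1 he.2.2.2.2,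
    h.single' he.1 he.2.1 he.2.2.1 he.2.2.2.1 he.2.2.2.2⟩

/-- Two edges without common ends. If they join the arcs in the same order, the bounds of
`one_chord` for them differ by the gaps between their ends; otherwise the reroutings that use both
edges apply, and in the sum of the two resulting bounds the gaps cancel. -/
lemma two_chords (h : Config G n f P m j l) {e e' : ℤ × ℤ} (he : IsChord G f m j l e)
    (he' : IsChord G f m j l e') (h1 : e.1 ≠ e'.1) (h2 : e.2 ≠ e'.2) :
    2 * (P.length : ℤ) + 8 ≤ m + (l - j) := by
  wlog hlt : e.1 < e'.1 generalizing e e'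
  · exact this he' he h1.symm h2.symm (by omega)
  have a1 := h.one_chord he
  have a2 := h.one_chord he'
  obtain ⟨b1, b2, b3, b4, b5⟩ := he
  obtain ⟨c1, c2, c3, c4, c5⟩ := he'
  rcases lt_or_gt_of_ne h2 with h2 | h2
  · omega
  · have := h.double b1 hlt c2 c3 h2 b4 b5 c5
    have := h.double' b1 hlt c2 c3 h2 b4 b5 c5
    omega

end Config

/-! ### Two elementary segments of a longest cycle -/

/-- Two elementary segments with nonempty disjoint interiors form a `Config`, once the
parametrization of the cycle is shifted so that `Ia` occupies the positions `[0, m]`. -/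
lemma exists_config [Fintype V] [DecidableEq V] {G : SimpleGraph V} [DecidableRel G.Adj]
    {u x y : V} (c : G.Walk u u) (P : G.Walk x y)
    (hc : IsLongestCycle c) (hP : IsLongestPathOutside c P)
    (heq : NC G c x = NC G c y)
    {a b a' b' : V} (Ia : G.Walk a b) (Ib : G.Walk a' b')
    (hIa : IsSegment c (NC G c x) Ia) (hIb : IsSegment c (NC G c x) Ib)
    (hdisj : ∀ v, v ∈ interior Ia → v ∉ interior Ib)
    (hne : Nonempty {pq : V × V | pq.1 ∈ interior Ia ∧ pq.2 ∈ interior Ib ∧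
      G.Adj pq.1 pq.2}) :
    ∃ (f : ℤ → V) (m j l : ℤ), Config G c.length f P m j l ∧ (Ia.length : ℤ) = m ∧
      (Ib.length : ℤ) = l - j ∧ (∀ v, v ∈ interior Ia ↔ ∃ r, 0 < r ∧ r < m ∧ v = f r) ∧
      ∀ v, v ∈ interior Ib ↔ ∃ r, j < r ∧ r < l ∧ v = f r := by
  obtain ⟨f₀, hf₀, hsupp₀, hedge₀⟩ := exists_cycParam c hc.1
  have h3 := hc.1.three_le_length
  have hA : ∀ v ∈ NC G c x, G.Adj x v ∧ G.Adj y v ∧ v ∈ c.support := by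
    intro v hv
    have hv' := hv
    rw [heq] at hv'
    simp only [NC, Finset.mem_filter, mem_neighborFinset] at hv hv'
    exact ⟨hv.1, hv'.1, hv.2⟩
  obtain ⟨-, la, haA, hbA, -, hea, hnoa⟩ := id hIa
  obtain ⟨-, lb, haA', hbA', -, heb, hnob⟩ := id hIb
  obtain ⟨s, hma, hab, hia⟩ := hf₀.exists_interval Ia hIa.1
    ((hsupp₀ a).1 (hA a haA).2.2) (fun e he => hedge₀ e (hea e he)) (by omega)
  obtain ⟨f, rfl⟩ : ∃ f : ℤ → V, f₀ = fun r => f (r - s) := ⟨fun r => f₀ (r + s), by simp⟩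
  have hf : CycParam G c.length f := by simpa using hf₀.shift s
  have hsupp : ∀ v, v ∈ c.support ↔ ∃ r, v = f r := fun v => by
    rw [hsupp₀]
    exact ⟨fun ⟨r, hr⟩ => ⟨_, hr⟩, fun ⟨r, hr⟩ => ⟨r + s, by simpa using hr⟩⟩
  have hedge : ∀ e ∈ c.edges, ∃ r, e = s(f r, f (r + 1)) := fun e he => by
    obtain ⟨r, hr⟩ := hedge₀ e he
    exact ⟨r - s, by rw [hr, sub_add_eq_add_sub]⟩
  have hia' : ∀ v, v ∈ interior Ia ↔ ∃ r : ℤ, 0 < r ∧ r < Ia.length ∧ v = f r := fun v => by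
    rw [hia]
    constructor
    · rintro ⟨r, h1, h2, h⟩
      exact ⟨r - s, by omega, by omega, h⟩
    · rintro ⟨r, h1, h2, h⟩
      exact ⟨r + s, by omega, by omega, by simpa using h⟩
  have h0A : f 0 ∈ NC G c x ∧ f Ia.length ∈ NC G c x := by
    simp only [sub_self, add_sub_cancel_left] at hab
    rcases hab with ⟨h1, h2⟩ | ⟨h1, h2⟩ <;> rw [← h1, ← h2]
    exacts [⟨haA, hbA⟩, ⟨hbA, haA⟩]
  obtain ⟨j₀, hmb, hab', hib₀⟩ := hf.exists_interval Ib hIb.1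
    ((hsupp a').1 (hA a' haA').2.2) (fun e he => hedge e (heb e he)) (by omega)
  -- move the position of `Ib` into `[0, n)`
  obtain ⟨j, hj0, hjn, hj⟩ : ∃ j : ℤ, 0 ≤ j ∧ j < c.length ∧ ∀ t, f (j₀ + t) = f (j + t) := by
    refine ⟨j₀ % c.length, Int.emod_nonneg _ (by omega), Int.emod_lt_of_pos _ (by omega),
      fun t => ?_⟩
    rw [← hf.per_mul (j₀ % c.length + t) (j₀ / c.length)]
    congr 1
    linear_combination -Int.mul_ediv_add_emod j₀ c.length
  have hib : ∀ v, v ∈ interior Ib ↔ ∃ r, j < r ∧ r < j + Ib.length ∧ v = f r := fun v => by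
    rw [hib₀]
    constructor
    · rintro ⟨r, h1, h2, rfl⟩
      refine ⟨j + (r - j₀), by omega, by omega, ?_⟩
      rw [← hj]; congr 1; ring
    · rintro ⟨r, h1, h2, rfl⟩
      refine ⟨j₀ + (r - j), by omega, by omega, ?_⟩
      rw [hj]; congr 1; ring
  have hjA : f j ∈ NC G c x ∧ f (j + Ib.length) ∈ NC G c x := by
    have e0 := hj 0
    rw [add_zero, add_zero] at e0
    rw [hj, e0] at hab'
    rcases hab' with ⟨h1, h2⟩ | ⟨h1, h2⟩ <;> rw [← h1, ← h2]
    exacts [⟨haA', hbA'⟩, ⟨hbA', haA'⟩]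
  obtain ⟨⟨v, w⟩, hv, hw, -⟩ := hne
  obtain ⟨r, hr1, hr2, -⟩ := (hia' v).1 hv
  obtain ⟨t, ht1, ht2, -⟩ := (hib w).1 hw
  -- `f j` belongs to the attachment set, so `j` is not interior to `Ia`; and if `j = 0`, then
  -- `f 1` is interior to both segments
  have hmj : (Ia.length : ℤ) ≤ j := by
    by_contra! hcon
    rcases hj0.eq_or_lt with h | h
    · exact hdisj (f 1) ((hia' _).2 ⟨1, by omega, by omega, rfl⟩)
        ((hib _).2 ⟨1, by omega, by omega, rfl⟩)
    · exact hnoa (f j) ((hia' _).2 ⟨j, h, hcon, rfl⟩) hjA.1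
  -- `f n = f 0` belongs to the attachment set, so `n` is not interior to `Ib`
  have hln : j + Ib.length ≤ c.length := by
    by_contra! hcon
    refine hnob (f c.length) ((hib _).2 ⟨c.length, hjn, hcon, rfl⟩) ?_
    have := hf.per 0
    rw [zero_add] at this
    rw [this]
    exact h0A.1
  refine ⟨f, Ia.length, j, j + Ib.length, ⟨hf, hP.1, fun r hr => ?_, ?_, by omega, hmj, by omega,
    hln, ?_⟩, rfl, by ring, hia', hib⟩
  · exact hP.2.1 _ hr ((hsupp _).2 ⟨r, rfl⟩)
  · intro s t D hD h2 hts
    have hcyc : (Walk.cons hts D).IsCycle := by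
      rw [Walk.cons_isCycle_iff]
      refine ⟨hD, fun hmem => ?_⟩
      obtain ⟨k, hk, he⟩ := D.mk_mem_edges_iff_exists.1 hmem
      rw [Sym2.eq_iff] at he
      rcases he with ⟨e1, e2⟩ | ⟨e1, e2⟩
      · have := (hD.getVert_eq_end_iff hk.le).1 e1
        omega
      · have := (hD.getVert_eq_start_iff hk.le).1 e1
        have := (hD.getVert_eq_end_iff hk).1 e2
        omega
    simpa using hc.2 _ _ hcyc
  · rintro r (rfl | rfl | rfl | rfl)
    exacts [⟨(hA _ h0A.1).1, (hA _ h0A.1).2.1⟩, ⟨(hA _ h0A.2).1, (hA _ h0A.2).2.1⟩,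
      ⟨(hA _ hjA.1).1, (hA _ hjA.1).2.1⟩, ⟨(hA _ hjA.2).1, (hA _ hjA.2).2.1⟩]

theorem stmt_4 [Fintype V] [DecidableEq V] (G : SimpleGraph V) [DecidableRel G.Adj]
    {u x y : V} (c : G.Walk u u) (P : G.Walk x y)
    (hc : IsLongestCycle c) (hP : IsLongestPathOutside c P)
    (heq : NC G c x = NC G c y) (h2 : 2 ≤ (NC G c x).card)
    {a b a' b' : V} (Ia : G.Walk a b) (Ib : G.Walk a' b')
    (hIa : IsSegment c (NC G c x) Ia) (hIb : IsSegment c (NC G c x) Ib)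
    (hdisj : ∀ v, v ∈ interior Ia → v ∉ interior Ib)
    (hall : ∀ (z w : V) (L : G.Walk z w), IsIntermediatePath c P Ia Ib L → L.length = 1)
    (i : ℕ) (hi : i ∈ ({1, 2, 3} : Set ℕ))
    (hcard : Nat.card {pq : V × V | pq.1 ∈ interior Ia ∧ pq.2 ∈ interior Ib ∧
      G.Adj pq.1 pq.2} = i) :
    2 * P.length + i + 5 ≤ Ia.length + Ib.length := by
  obtain ⟨f, m, j, l, hcfg, hm, hl, hia, hib⟩ :=
    exists_config c P hc hP heq Ia Ib hIa hIb hdisj (by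
      rcases hi with rfl | rfl | rfl <;> exact (Nat.card_pos_iff.1 (by omega)).1)
  have key : ∀ pq : V × V, pq.1 ∈ interior Ia ∧ pq.2 ∈ interior Ib ∧ G.Adj pq.1 pq.2 →
      ∃ e : ℤ × ℤ, Config.IsChord G f m j l e ∧ pq = (f e.1, f e.2) := by
    rintro ⟨v, w⟩ ⟨hv, hw, hvw⟩
    obtain ⟨r, h1, h2, rfl⟩ := (hia v).1 hv
    obtain ⟨s, h3, h4, rfl⟩ := (hib w).1 hw
    exact ⟨(r, s), ⟨h1, h2, h3, h4, hvw⟩, rfl⟩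
  have hne : ∀ e e' : ℤ × ℤ, (f e.1, f e.2) ≠ (f e'.1, f e'.2) → e.1 ≠ e'.1 ∨ e.2 ≠ e'.2 := by
    intro e e' h
    by_contra! hcon
    exact h (by rw [hcon.1, hcon.2])
  rw [Nat.card_coe_set_eq] at hcard
  rcases hi with rfl | rfl | rfl
  · obtain ⟨p, hp⟩ := Set.ncard_eq_one.1 hcard
    obtain ⟨e, he, -⟩ := key p (hp.ge rfl)
    have := hcfg.one_chord he
    omega
  · obtain ⟨p, q, hpq, hS⟩ := Set.ncard_eq_two.1 hcard
    obtain ⟨e, he, rfl⟩ := key p (hS.ge (by simp))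
    obtain ⟨e', he', rfl⟩ := key q (hS.ge (by simp))
    have h1 := hcfg.one_chord he
    have h2 := hcfg.one_chord he'
    have h3 := hcfg.two_chords he he'
    have h4 := hne _ _ hpq
    omega
  · obtain ⟨p, q, r, hpq, hpr, hqr, hS⟩ := Set.ncard_eq_three.1 hcard
    obtain ⟨e, he, rfl⟩ := key p (hS.ge (by simp))
    obtain ⟨e', he', rfl⟩ := key q (hS.ge (by simp))
    obtain ⟨e'', he'', rfl⟩ := key r (hS.ge (by simp))
    have h1 := hcfg.one_chord he
    have h2 := hcfg.one_chord he'
    have h3 := hcfg.one_chord he''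
    have h4 := hcfg.two_chords he he'
    have h5 := hcfg.two_chords he he''
    have h6 := hcfg.two_chords he' he''
    have h7 := hne _ _ hpq
    have h8 := hne _ _ hpr
    have h9 := hne _ _ hqr
    omega

end Paper
end

section
/- Let G be a finite simple graph, C a longest cycle in G, and P a longest path in G \ C with endpoints x, y and length p ≥ 0. Suppose N_C(x) = N_C(y) and |N_C(x)| ≥ 2. Let I_a and I_b be two distinct elementary segments. If all intermediate paths between I_a and I_b are single edges and among them there are two independent (vertex-disjoint) edges, then |I_a| + |I_b| ≥ 2p + 8. -/
/-!
Write `p` for the length of `P` and orient the cycle as `I_a R₁ I_b R₂`, where `I_a` runs from `a`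
to `b` and `I_b` from `a'` to `b'`; both ends of `P` are adjacent to `a`, `b`, `a'` and `b'`. Let
`u₁`, `u₂` be the ends on `I_a`, in this order, of two independent edges `u₁v₁`, `u₂v₂` between
the interiors of the segments.

* If `v₁` precedes `v₂` on `I_b`, a cycle through `P` and `u₁v₁` avoids only what lies between `a`
  and `u₁` and between `a'` and `v₁`, so maximality bounds the total length of these two pieces
  below by `p + 3` (`single_edge`). The edge `u₂v₂` gives the same for the pieces that end at `b`
  and `b'`, and the pieces `u₁u₂` and `v₁v₂` add at least `2`.
* If `v₂` precedes `v₁`, a cycle through `P` and both edges avoids only the piece `u₁u₂` and the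
  two outer pieces of `I_b`, which therefore have total length at least `p + 4` (`nested_edges`);
  exchanging the segments bounds the remaining three pieces in the same way.

In both cases the sum is at least `2p + 8`. That the new closed walks repeat no vertex is checked
by counting, for each vertex, its visits on every piece. `exists_complementary_arc` and
`exists_append_append_of_edges_subset` turn the description of a segment by its set of edges into
the decomposition `I_a R₁ I_b R₂`.
-/

open SimpleGraph Finset

namespace Paper

variable {V : Type*}

/-! ### Counting vertices on walks -/

section Count

variable [DecidableEq V] {G : SimpleGraph V}

/-- The indicator of the vertex `a`, as a function of `v`. -/
def ind (a v : V) : ℕ := if a = v then 1 else 0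

/-- The number of times the walk `p` visits the vertex `v`. -/
def visits {a b : V} (p : G.Walk a b) (v : V) : ℕ := p.support.count v

lemma ind_le_one (a v : V) : ind a v ≤ 1 := by
  unfold ind; split_ifs <;> simp

lemma ind_add_ind_le_one {a b : V} (h : a ≠ b) (v : V) : ind a v + ind b v ≤ 1 := by
  unfold ind; grind

lemma visits_pos {a b : V} {p : G.Walk a b} {v : V} : 0 < visits p v ↔ v ∈ p.support :=
  List.count_pos_iff

lemma ind_le_visits {a b w : V} {p : G.Walk a b} (h : w ∈ p.support) (v : V) :
    ind w v ≤ visits p v := by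
  unfold ind
  split_ifs with hv
  · exact visits_pos.2 (hv ▸ h)
  · exact Nat.zero_le _

lemma ind_add_ind_le_visits {a b : V} (p : G.Walk a b) (h : a ≠ b) (v : V) :
    ind a v + ind b v ≤ visits p v := by
  have h1 := ind_le_visits p.start_mem_support v
  have h2 := ind_le_visits p.end_mem_support v
  have h3 := ind_add_ind_le_one h v
  omega

/-- The middle vertex of a concatenation is shared by the two parts. -/
lemma visits_append {a b c : V} (p : G.Walk a b) (q : G.Walk b c) (v : V) :
    visits (p.append q) v + ind b v = visits p v + visits q v := by
  have : visits q v = ind b v + q.support.tail.count v := by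
    unfold visits ind
    conv_lhs => rw [← q.cons_tail_support]
    rw [List.count_cons]
    simp only [beq_iff_eq]
    omega
  rw [this]
  simp only [visits, Walk.support_append, List.count_append]
  omega

lemma visits_reverse {a b : V} (p : G.Walk a b) (v : V) : visits p.reverse v = visits p v := by
  simp [visits]

lemma visits_toWalk {a b : V} (h : G.Adj a b) (v : V) :
    visits h.toWalk v = ind a v + ind b v := by
  simp [visits, ind, List.count_cons, add_comm]

lemma isPath_iff_visits {a b : V} {p : G.Walk a b} : p.IsPath ↔ ∀ v, visits p v ≤ 1 := by
  rw [Walk.isPath_def, List.nodup_iff_count_le_one]; rfl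

/-- A cycle visits each vertex at most once, apart from its base point, which it visits twice. -/
lemma visits_cycle {a : V} {c : G.Walk a a} (hc : c.IsCycle) (v : V) :
    visits c v ≤ 1 + ind a v := by
  have h := List.nodup_iff_count_le_one.1 ((Walk.isCycle_def _).1 hc).2.2 v
  unfold visits ind
  conv_lhs => rw [← c.cons_tail_support]
  rw [List.count_cons]
  simp only [beq_iff_eq]
  omega

/-- The circumference bound: every cycle of `G` has length at most `N`. -/
def CyclesLe (G : SimpleGraph V) (N : ℕ) : Prop :=
  ∀ (v : V) (d : G.Walk v v), d.IsCycle → d.length ≤ N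

/-- A path of length at least two whose ends are adjacent closes up to a cycle. -/
lemma CyclesLe.path {N : ℕ} (hmax : CyclesLe G N) {a b : V} (h : G.Adj b a) (q : G.Walk a b)
    (hq : ∀ v, visits q v ≤ 1) (hl : 2 ≤ q.length) : q.length + 1 ≤ N := by
  have hp := isPath_iff_visits.2 hq
  have hcyc : (Walk.cons h q).IsCycle := by
    rw [Walk.cons_isCycle_iff]
    refine ⟨hp, fun he => ?_⟩
    rw [Sym2.eq_swap] at he
    have := hp.length_eq_one_of_mem_edges he
    omega
  simpa using hmax _ _ hcyc

end Count

/-! ### Longer cycles through the outside path -/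

lemma length_pos_of_ne {G : SimpleGraph V} {a b : V} (p : G.Walk a b) (h : a ≠ b) : 1 ≤ p.length := by
  by_contra hp
  exact h (Walk.eq_of_length_eq_zero (p := p) (by omega))

section Core

variable [DecidableEq V] {G : SimpleGraph V}

/-- A single edge `zw` between the arcs `A₁A₂` and `B₁B₂` of the cycle `A₁A₂R₁B₁B₂R₂`: the detour
through `P` and `zw` drops `A₁` and `B₁` and gains `p + 3` edges. The hypothesis `H` says that the
cycle has no repeated vertex and that `P` is a path disjoint from it. -/
lemma single_edge {x y a b a' b' z w : V} {N : ℕ} (hmax : CyclesLe G N) (P : G.Walk x y)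
    (A₁ : G.Walk a z) (A₂ : G.Walk z b) (R₁ : G.Walk b a') (B₁ : G.Walk a' w) (B₂ : G.Walk w b')
    (R₂ : G.Walk b' a)
    (H : ∀ v, visits P v + visits A₁ v + visits A₂ v + visits R₁ v + visits B₁ v + visits B₂ v +
      visits R₂ v ≤ 1 + ind z v + ind b v + ind a' v + ind w v + ind b' v + ind a v)
    (hN : N = A₁.length + A₂.length + R₁.length + B₁.length + B₂.length + R₂.length)
    (hax : G.Adj a x) (hya : G.Adj y a') (hzw : G.Adj z w) (haz : a ≠ z) (haw : a' ≠ w) :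
    P.length + 3 ≤ A₁.length + B₁.length := by
  have := hmax.path hax
    (P.append (hya.toWalk.append (R₁.reverse.append (A₂.reverse.append
      (hzw.toWalk.append (B₂.append R₂)))))) ?_ ?_
  · simp only [Walk.length_append, Walk.length_reverse, Walk.length_cons, Walk.length_nil] at this
    omega
  · intro v
    have h1 := visits_append P (hya.toWalk.append (R₁.reverse.append (A₂.reverse.append
      (hzw.toWalk.append (B₂.append R₂))))) v
    have h2 := visits_append hya.toWalk (R₁.reverse.append (A₂.reverse.append
      (hzw.toWalk.append (B₂.append R₂)))) v
    have h3 := visits_append R₁.reverse (A₂.reverse.append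
      (hzw.toWalk.append (B₂.append R₂))) v
    have h4 := visits_append A₂.reverse (hzw.toWalk.append (B₂.append R₂)) v
    have h5 := visits_append hzw.toWalk (B₂.append R₂) v
    have h6 := visits_append B₂ R₂ v
    have h7 := ind_add_ind_le_visits A₁ haz v
    have h8 := ind_add_ind_le_visits B₁ haw v
    have h9 := H v
    simp only [visits_reverse, visits_toWalk] at h1 h2 h3 h4 h5 h6
    omega
  · simp only [Walk.length_append, Walk.length_cons, Walk.length_nil]
    omega

/-- Two nested edges `z₁w₁`, `z₂w₂` between the arcs `A₁A₂A₃` and `B₁B₂B₃`: the detour through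
`P` and both edges drops `A₂`, `B₁` and `B₃` and gains `p + 4` edges. -/
lemma nested_edges {x y a b a' b' z₁ z₂ w₁ w₂ : V} {N : ℕ} (hmax : CyclesLe G N)
    (P : G.Walk x y)
    (A₁ : G.Walk a z₁) (A₂ : G.Walk z₁ z₂) (A₃ : G.Walk z₂ b) (R₁ : G.Walk b a')
    (B₁ : G.Walk a' w₂) (B₂ : G.Walk w₂ w₁) (B₃ : G.Walk w₁ b') (R₂ : G.Walk b' a)
    (H : ∀ v, visits P v + visits A₁ v + visits A₂ v + visits A₃ v + visits R₁ v + visits B₁ v +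
      visits B₂ v + visits B₃ v + visits R₂ v ≤
      1 + ind z₁ v + ind z₂ v + ind b v + ind a' v + ind w₂ v + ind w₁ v + ind b' v + ind a v)
    (hN : N = A₁.length + A₂.length + A₃.length + R₁.length + B₁.length + B₂.length +
      B₃.length + R₂.length)
    (hax : G.Adj a' x) (hyb : G.Adj y b') (h₁ : G.Adj z₁ w₁) (h₂ : G.Adj z₂ w₂)
    (hz : z₁ ≠ z₂) (ha : a' ≠ w₂) (hb : w₁ ≠ b') :
    P.length + 4 ≤ A₂.length + B₁.length + B₃.length := by
  have := hmax.path hax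
    (P.append (hyb.toWalk.append (R₂.append (A₁.append (h₁.toWalk.append (B₂.reverse.append
      (h₂.symm.toWalk.append (A₃.append R₁)))))))) ?_ ?_
  · simp only [Walk.length_append, Walk.length_reverse, Walk.length_cons, Walk.length_nil] at this
    omega
  · intro v
    have k1 := visits_append P (hyb.toWalk.append (R₂.append (A₁.append (h₁.toWalk.append
      (B₂.reverse.append (h₂.symm.toWalk.append (A₃.append R₁))))))) v
    have k2 := visits_append hyb.toWalk (R₂.append (A₁.append (h₁.toWalk.append
      (B₂.reverse.append (h₂.symm.toWalk.append (A₃.append R₁)))))) v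
    have k3 := visits_append R₂ (A₁.append (h₁.toWalk.append
      (B₂.reverse.append (h₂.symm.toWalk.append (A₃.append R₁))))) v
    have k4 := visits_append A₁ (h₁.toWalk.append
      (B₂.reverse.append (h₂.symm.toWalk.append (A₃.append R₁)))) v
    have k5 := visits_append h₁.toWalk
      (B₂.reverse.append (h₂.symm.toWalk.append (A₃.append R₁))) v
    have k6 := visits_append B₂.reverse (h₂.symm.toWalk.append (A₃.append R₁)) v
    have k7 := visits_append h₂.symm.toWalk (A₃.append R₁) v
    have k8 := visits_append A₃ R₁ v
    have l1 := ind_add_ind_le_visits A₂ hz v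
    have l2 := ind_add_ind_le_visits B₁ ha v
    have l3 := ind_add_ind_le_visits B₃ hb v
    have l4 := H v
    simp only [visits_reverse, visits_toWalk] at k1 k2 k3 k4 k5 k6 k7 k8
    omega
  · simp only [Walk.length_append, Walk.length_cons, Walk.length_nil]
    omega

lemma exists_split {a b u : V} (I : G.Walk a b) (h : u ∈ I.support) :
    ∃ (A₁ : G.Walk a u) (A₂ : G.Walk u b), I = A₁.append A₂ :=
  ⟨_, _, (I.take_spec h).symm⟩

/-- Two vertices of a walk cut it into three pieces, in one order or the other. -/
lemma exists_split_three {a b u₁ u₂ : V} (I : G.Walk a b) (h₁ : u₁ ∈ I.support)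
    (h₂ : u₂ ∈ I.support) :
    (∃ (A₁ : G.Walk a u₁) (A₂ : G.Walk u₁ u₂) (A₃ : G.Walk u₂ b),
      I = A₁.append (A₂.append A₃)) ∨
    (∃ (A₁ : G.Walk a u₂) (A₂ : G.Walk u₂ u₁) (A₃ : G.Walk u₁ b),
      I = A₁.append (A₂.append A₃)) := by
  obtain ⟨p, q, rfl⟩ := exists_split I h₁
  rcases (Walk.mem_support_append_iff p q).1 h₂ with h | h
  · obtain ⟨r, s, rfl⟩ := exists_split p h
    exact Or.inr ⟨r, s, q, by rw [Walk.append_assoc]⟩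
  · obtain ⟨r, s, rfl⟩ := exists_split q h
    exact Or.inl ⟨p, r, s, rfl⟩

/-- The bound when the cycle is `I_a R₁ I_b R₂` and `u₁` precedes `u₂` on `I_a`. -/
lemma bound_of_ordered {x y a b a' b' u₁ u₂ v₁ v₂ : V} {N : ℕ} (hmax : CyclesLe G N)
    (P : G.Walk x y)
    (A₁ : G.Walk a u₁) (A₂ : G.Walk u₁ u₂) (A₃ : G.Walk u₂ b) (R₁ : G.Walk b a')
    (Ib : G.Walk a' b') (R₂ : G.Walk b' a)
    (H : ∀ v, visits P v + visits A₁ v + visits A₂ v + visits A₃ v + visits R₁ v + visits Ib v +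
      visits R₂ v ≤ 1 + ind u₁ v + ind u₂ v + ind b v + ind a' v + ind b' v + ind a v)
    (hN : N = A₁.length + A₂.length + A₃.length + R₁.length + Ib.length + R₂.length)
    (hx : ∀ v ∈ [a, b, a', b'], G.Adj x v) (hy : ∀ v ∈ [a, b, a', b'], G.Adj y v)
    (hu₁ : u₁ ≠ a) (hu₂ : u₂ ≠ b) (hv₁ : v₁ ∈ interior Ib) (hv₂ : v₂ ∈ interior Ib)
    (h₁ : G.Adj u₁ v₁) (h₂ : G.Adj u₂ v₂) (hu : u₁ ≠ u₂) (hv : v₁ ≠ v₂) :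
    2 * P.length + 8 ≤ A₁.length + A₂.length + A₃.length + Ib.length := by
  simp only [List.mem_cons, List.not_mem_nil, or_false, forall_eq_or_imp, forall_eq] at hx hy
  obtain ⟨hxa, hxb, hxa', hxb'⟩ := hx
  obtain ⟨hya, hyb, hya', hyb'⟩ := hy
  obtain ⟨hv₁m, hv₁a, hv₁b⟩ := hv₁
  obtain ⟨hv₂m, hv₂a, hv₂b⟩ := hv₂
  rcases exists_split_three Ib hv₁m hv₂m with ⟨B₁, B₂, B₃, rfl⟩ | ⟨B₁, B₂, B₃, rfl⟩
  · -- Crossing edges: each of them is used alone, on opposite sides.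
    have e1 := single_edge hmax P A₁ (A₂.append A₃) R₁ B₁ (B₂.append B₃) R₂ (fun v => by
      have k1 := visits_append A₂ A₃ v
      have k2 := visits_append B₁ (B₂.append B₃) v
      have := H v
      omega) (by simp only [Walk.length_append] at *; omega) hxa.symm hya' h₁ hu₁.symm hv₁a.symm
    have e2 := single_edge hmax P A₃.reverse (A₁.append A₂).reverse R₂.reverse B₃.reverse
      (B₁.append B₂).reverse R₁.reverse (fun v => by
        have k1 := visits_append A₁ A₂ v
        have k2 := visits_append B₁ (B₂.append B₃) v
        have k3 := visits_append B₁ B₂ v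
        have k4 := visits_append B₂ B₃ v
        have := H v
        simp only [visits_reverse]
        omega) (by simp only [Walk.length_append, Walk.length_reverse] at *; omega)
      hxb.symm hyb' h₂ hu₂.symm hv₂b.symm
    have e3 := length_pos_of_ne A₂ hu
    have e4 := length_pos_of_ne B₂ hv
    simp only [Walk.length_append, Walk.length_reverse] at *
    omega
  · -- Nested edges: both are used together, once in each of the two symmetric ways.
    have HH : ∀ v, visits P v + visits A₁ v + visits A₂ v + visits A₃ v + visits R₁ v +
        visits B₁ v + visits B₂ v + visits B₃ v + visits R₂ v ≤ 1 + ind u₁ v + ind u₂ v +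
        ind b v + ind a' v + ind v₂ v + ind v₁ v + ind b' v + ind a v := fun v => by
      have k1 := visits_append B₁ (B₂.append B₃) v
      have k2 := visits_append B₂ B₃ v
      have := H v
      omega
    simp only [Walk.length_append] at *
    have e1 := nested_edges hmax P A₁ A₂ A₃ R₁ B₁ B₂ B₃ R₂ HH (by omega) hxa'.symm hyb' h₁ h₂ hu
      hv₂a.symm hv₁b
    have e2 := nested_edges hmax P B₁ B₂ B₃ R₂ A₁ A₂ A₃ R₁ (fun v => by have := HH v; omega)
      (by omega) hxa.symm hyb h₂.symm h₁.symm hv.symm hu₁.symm hu₂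
    omega

/-- The bound when the cycle is `I_a R₁ I_b R₂`. -/
lemma bound_of_cycle {x y a b a' b' u₁ u₂ v₁ v₂ : V} {N : ℕ} (hmax : CyclesLe G N)
    (P : G.Walk x y) (Ia : G.Walk a b) (R₁ : G.Walk b a') (Ib : G.Walk a' b') (R₂ : G.Walk b' a)
    (H : ∀ v, visits P v + visits Ia v + visits R₁ v + visits Ib v + visits R₂ v ≤
      1 + ind b v + ind a' v + ind b' v + ind a v)
    (hN : N = Ia.length + R₁.length + Ib.length + R₂.length)
    (hx : ∀ v ∈ [a, b, a', b'], G.Adj x v) (hy : ∀ v ∈ [a, b, a', b'], G.Adj y v)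
    (hu₁ : u₁ ∈ interior Ia) (hu₂ : u₂ ∈ interior Ia)
    (hv₁ : v₁ ∈ interior Ib) (hv₂ : v₂ ∈ interior Ib)
    (h₁ : G.Adj u₁ v₁) (h₂ : G.Adj u₂ v₂) (hu : u₁ ≠ u₂) (hv : v₁ ≠ v₂) :
    2 * P.length + 8 ≤ Ia.length + Ib.length := by
  obtain ⟨hu₁m, hu₁a, hu₁b⟩ := hu₁
  obtain ⟨hu₂m, hu₂a, hu₂b⟩ := hu₂
  rcases exists_split_three Ia hu₁m hu₂m with ⟨A₁, A₂, A₃, rfl⟩ | ⟨A₁, A₂, A₃, rfl⟩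
  all_goals
    have HH := fun v => And.intro (visits_append A₁ (A₂.append A₃) v) (visits_append A₂ A₃ v)
    simp only [Walk.length_append] at *
  · have := bound_of_ordered hmax P A₁ A₂ A₃ R₁ Ib R₂
      (fun v => by have := H v; have := HH v; omega) (by omega) hx hy hu₁a hu₂b hv₁ hv₂ h₁ h₂ hu hv
    omega
  · have := bound_of_ordered hmax P A₁ A₂ A₃ R₁ Ib R₂
      (fun v => by have := H v; have := HH v; omega) (by omega) hx hy hu₂a hu₁b hv₂ hv₁ h₂ h₁
      hu.symm hv.symm
    omega

end Core

/-! ### Arcs of paths and cycles -/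

lemma snd_mem_of_cons_eq_append {G : SimpleGraph V} {s s₁ t b : V} {hadj : G.Adj s s₁}
    {W : G.Walk s₁ t} (q : G.Walk s b) {Q : G.Walk b t} (hsb : s ≠ b)
    (e : Walk.cons hadj W = q.append Q) : s₁ ∈ q.support := by
  cases q with
  | nil => exact absurd rfl hsb
  | cons _ q' =>
    rw [Walk.cons_append] at e
    injection e with _ e
    subst e
    simp

/-- A path that starts at the first vertex of the path `W` and uses only edges of `W` is an
initial piece of `W`. -/
lemma exists_append_of_edges_subset {G : SimpleGraph V} {s t : V} (W : G.Walk s t) (hW : W.IsPath) {b : V}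
    (I : G.Walk s b) (hI : I.IsPath) (h : ∀ e ∈ I.edges, e ∈ W.edges) :
    ∃ Q : G.Walk b t, W = I.append Q := by
  induction I with
  | nil => exact ⟨W, rfl⟩
  | @cons s s₁ b hadj I' ih =>
    cases W with
    | nil => exact absurd (h s(t, s₁) (by simp)) (by simp)
    | @cons _ s₂ _ hadj' W' =>
      have hs : s₁ = s₂ := by
        simpa using hW.eq_snd_of_mem_edges (h s(s, s₁) (by simp))
      subst hs
      rw [Walk.cons_isPath_iff] at hI hW
      obtain ⟨Q, rfl⟩ := ih W' hW.1 hI.1 (fun e he => by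
        have := h e (by simp [he])
        rw [Walk.edges_cons, List.mem_cons] at this
        rcases this with rfl | this
        · exact absurd (I'.fst_mem_support_of_mem_edges he) hI.2
        · exact this)
      exact ⟨Q, rfl⟩

section Arcs

variable [DecidableEq V] {G : SimpleGraph V}

/-- A path whose edges all lie on the path `W` is, up to reversal, a piece of `W`. -/
lemma exists_append_append_of_edges_subset {s t : V} (W : G.Walk s t) (hW : W.IsPath) {a b : V}
    (I : G.Walk a b) (hI : I.IsPath) (hab : a ≠ b) (h : ∀ e ∈ I.edges, e ∈ W.edges) :
    (∃ (R₁ : G.Walk s a) (R₂ : G.Walk b t), W = R₁.append (I.append R₂)) ∨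
    (∃ (R₁ : G.Walk s b) (R₂ : G.Walk a t), W = R₁.append (I.reverse.append R₂)) := by
  induction W with
  | nil =>
    cases I with
    | nil => exact absurd rfl hab
    | @cons _ i _ _ _ => exact absurd (h s(a, i) (by simp)) (by simp)
  | @cons s s₁ t hadj W' ih =>
    by_cases hs : s ∈ I.support
    · obtain ⟨p, q, rfl⟩ := exists_split I hs
      obtain ⟨Q₁, e₁⟩ := exists_append_of_edges_subset _ hW p.reverse
        hI.of_append_left.reverse (fun e he => h e (by simp_all))
      obtain ⟨Q₂, e₂⟩ := exists_append_of_edges_subset _ hW q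
        hI.of_append_right (fun e he => h e (by simp_all))
      by_cases ha : s = a
      · subst ha
        left
        obtain rfl : p = Walk.nil := (Walk.isPath_iff_nil.1 hI.of_append_left).eq_nil
        exact ⟨Walk.nil, Q₂, by simpa using e₂⟩
      by_cases hb : s = b
      · subst hb
        right
        obtain rfl : q = Walk.nil := (Walk.isPath_iff_nil.1 hI.of_append_right).eq_nil
        exact ⟨Walk.nil, Q₁, by simpa using e₁⟩
      -- If `s` were inside `I`, both neighbours of `s` on `I` would be the second vertex of `W`.
      exfalso
      have m₁ : s₁ ∈ p.support := by
        simpa using snd_mem_of_cons_eq_append p.reverse ha e₁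
      have m₂ : s₁ ∈ q.support := snd_mem_of_cons_eq_append q hb e₂
      have k := visits_append p q s₁
      have k1 := isPath_iff_visits.1 hI s₁
      have k2 := visits_pos.2 m₁
      have k3 := visits_pos.2 m₂
      have k4 : ind s s₁ = 0 := if_neg hadj.ne
      omega
    · have hW' := (Walk.cons_isPath_iff _ _).1 hW
      rcases ih hW'.1 (fun e he => by
        have := h e he
        rw [Walk.edges_cons, List.mem_cons] at this
        rcases this with rfl | this
        · exact absurd (I.fst_mem_support_of_mem_edges he) hs
        · exact this) with ⟨R₁, R₂, e⟩ | ⟨R₁, R₂, e⟩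
      · exact Or.inl ⟨Walk.cons hadj R₁, R₂, by rw [e]; rfl⟩
      · exact Or.inr ⟨Walk.cons hadj R₁, R₂, by rw [e]; rfl⟩

/-- A path `I` whose edges lie on a cycle is an arc of it: some walk `Q` closes `I` up to the same
cycle, possibly traversed from another base point or in the other direction. -/
lemma exists_complementary_arc {u a b : V} {c : G.Walk u u} (hc : c.IsCycle) (I : G.Walk a b)
    (hI : I.IsPath) (hab : a ≠ b) (ha : a ∈ c.support) (h : ∀ e ∈ I.edges, e ∈ c.edges) :
    ∃ Q : G.Walk b a, (I.append Q).IsCycle ∧ (I.append Q).length = c.length ∧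
      (∀ e, e ∈ (I.append Q).edges ↔ e ∈ c.edges) ∧
      (∀ v, v ∈ (I.append Q).support → v ∈ c.support) := by
  suffices key : ∀ d : G.Walk a a, d.IsCycle → (∀ e ∈ I.edges, e ∈ d.edges) →
      ∃ Q : G.Walk b a, I.append Q = d ∨ I.append Q = d.reverse by
    have he : ∀ e, e ∈ (c.rotate a ha).edges ↔ e ∈ c.edges := fun e =>
      (c.rotate_edges a ha).mem_iff
    have hs : ∀ v, v ∈ (c.rotate a ha).support ↔ v ∈ c.support := fun v =>
      c.mem_support_rotate_iff a ha
    have hl : (c.rotate a ha).length = c.length := by simp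
    obtain ⟨Q, hQ | hQ⟩ := key (c.rotate a ha) (hc.rotate ha) (fun e hm => (he e).2 (h e hm))
    · refine ⟨Q, ?_⟩
      rw [hQ]
      exact ⟨hc.rotate ha, hl, he, fun v => (hs v).1⟩
    · refine ⟨Q, ?_⟩
      rw [hQ]
      refine ⟨(hc.rotate ha).reverse, by simp, fun e => ?_, fun v => ?_⟩
      · rw [Walk.edges_reverse, List.mem_reverse, he]
      · rw [Walk.support_reverse, List.mem_reverse, hs]; exact id
  intro d hd h
  cases d with
  | nil => exact absurd hd Walk.not_isCycle_nil
  | @cons _ s _ g W =>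
    have hW := ((Walk.cons_isCycle_iff _ _).1 hd).1
    cases I with
    | nil => exact absurd rfl hab
    | @cons _ i _ g' I' =>
      by_cases hm : s(a, s) ∈ (Walk.cons g' I').edges
      · obtain rfl : s = i := by simpa using hI.eq_snd_of_mem_edges hm
        rw [Walk.cons_isPath_iff] at hI
        obtain ⟨Q, rfl⟩ := exists_append_of_edges_subset W hW I' hI.1 (fun e he => by
          have := h e (by simp [he])
          rw [Walk.edges_cons, List.mem_cons] at this
          rcases this with rfl | this
          · exact absurd (I'.fst_mem_support_of_mem_edges he) hI.2
          · exact this)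
        exact ⟨Q, Or.inl rfl⟩
      · obtain ⟨Q, e⟩ := exists_append_of_edges_subset W.reverse hW.reverse _ hI
          (fun e he => by
            have := h e he
            rw [Walk.edges_cons, List.mem_cons] at this
            rcases this with rfl | this
            · exact absurd he hm
            · simpa using this)
        refine ⟨Q.append g.symm.toWalk, Or.inr ?_⟩
        rw [Walk.append_assoc, ← e]
        simp [Walk.reverse_cons]

end Arcs

/-- The bound once the cycle has been written as `I_a Q` with `I_b` an arc of `Q`. -/
lemma bound_of_arc [DecidableEq V] {G : SimpleGraph V} {x y a b a' b' u₁ u₂ v₁ v₂ : V} {N : ℕ}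
    (hmax : CyclesLe G N)
    (P : G.Walk x y) (Ia : G.Walk a b) (Q : G.Walk b a) (Ib : G.Walk a' b')
    (R₁ : G.Walk b a') (R₂ : G.Walk b' a) (hQ : Q = R₁.append (Ib.append R₂))
    (hP : P.IsPath) (hcyc : (Ia.append Q).IsCycle)
    (hPc : ∀ v ∈ P.support, v ∉ (Ia.append Q).support)
    (hN : N = (Ia.append Q).length)
    (hx : ∀ v ∈ [a, b, a', b'], G.Adj x v) (hy : ∀ v ∈ [a, b, a', b'], G.Adj y v)
    (hu₁ : u₁ ∈ interior Ia) (hu₂ : u₂ ∈ interior Ia)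
    (hv₁ : v₁ ∈ interior Ib) (hv₂ : v₂ ∈ interior Ib)
    (h₁ : G.Adj u₁ v₁) (h₂ : G.Adj u₂ v₂) (hu : u₁ ≠ u₂) (hv : v₁ ≠ v₂) :
    2 * P.length + 8 ≤ Ia.length + Ib.length := by
  subst hQ
  refine bound_of_cycle hmax P Ia R₁ Ib R₂ (fun v => ?_) ?_ hx hy hu₁ hu₂ hv₁ hv₂ h₁ h₂ hu hv
  · have k1 := visits_append Ia (R₁.append (Ib.append R₂)) v
    have k2 := visits_append R₁ (Ib.append R₂) v
    have k3 := visits_append Ib R₂ v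
    have k4 := visits_cycle hcyc v
    have k5 := isPath_iff_visits.1 hP v
    by_cases hm : v ∈ P.support
    · have k6 : visits (Ia.append (R₁.append (Ib.append R₂))) v = 0 := by
        have := mt visits_pos.1 (hPc v hm)
        omega
      omega
    · have k6 : visits P v = 0 := by
        have := mt visits_pos.1 hm
        omega
      omega
  · simp only [Walk.length_append] at hN
    omega

theorem stmt_5 [Fintype V] [DecidableEq V] (G : SimpleGraph V) [DecidableRel G.Adj]
    {u x y : V} (c : G.Walk u u) (P : G.Walk x y)
    (hc : IsLongestCycle c) (hP : IsLongestPathOutside c P)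
    (heq : NC G c x = NC G c y) (h2 : 2 ≤ (NC G c x).card)
    {a b a' b' : V} (Ia : G.Walk a b) (Ib : G.Walk a' b')
    (hIa : IsSegment c (NC G c x) Ia) (hIb : IsSegment c (NC G c x) Ib)
    (hdisj : ∀ v, v ∈ interior Ia → v ∉ interior Ib)
    (hall : ∀ (z w : V) (L : G.Walk z w), IsIntermediatePath c P Ia Ib L → L.length = 1)
    (hind : ∃ u₁ v₁ u₂ v₂ : V, u₁ ∈ interior Ia ∧ u₂ ∈ interior Ia ∧
      v₁ ∈ interior Ib ∧ v₂ ∈ interior Ib ∧ G.Adj u₁ v₁ ∧ G.Adj u₂ v₂ ∧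
      u₁ ≠ u₂ ∧ v₁ ≠ v₂) :
    2 * P.length + 8 ≤ Ia.length + Ib.length := by
  classical
  obtain ⟨u₁, v₁, u₂, v₂, hu₁, hu₂, hv₁, hv₂, h₁, h₂, hu, hv⟩ := hind
  obtain ⟨hcc, hmax⟩ := hc
  obtain ⟨hPp, hPc, -⟩ := hP
  obtain ⟨hIap, hIal, haA, hbA, hIas, hIae, hIaA⟩ := hIa
  obtain ⟨hIbp, hIbl, ha'A, hb'A, hIbs, hIbe, hIbA⟩ := hIb
  have hab : a ≠ b := by
    rintro rfl
    simp [(Walk.isPath_iff_nil.1 hIap).eq_nil] at hIal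
  have hab' : a' ≠ b' := by
    rintro rfl
    simp [(Walk.isPath_iff_nil.1 hIbp).eq_nil] at hIbl
  have hxA : ∀ v ∈ NC G c x, G.Adj x v := fun v hv => by
    simpa using (Finset.mem_filter.1 hv).1
  have hyA : ∀ v ∈ NC G c x, G.Adj y v := fun v hv => by
    rw [heq] at hv
    simpa using (Finset.mem_filter.1 hv).1
  obtain ⟨Q, hcyc, hlen, hedges, hsupp⟩ := exists_complementary_arc hcc Ia hIap hab
    (hIas a Ia.start_mem_support) hIae
  have hQp : Q.IsPath := isPath_iff_visits.2 fun v => by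
    have k1 := visits_append Ia Q v
    have k2 := visits_cycle hcyc v
    have k3 := ind_add_ind_le_visits Ia hab v
    omega
  -- The segments meet at most in the ends of `Ia`, because their interiors are disjoint and avoid
  -- the attachment set.
  have hmid : ∀ s ∈ Ia.support, s ∈ Ib.support → s = a ∨ s = b := fun s hs hs' => by
    by_contra hcon
    push Not at hcon
    have hsI : s ∈ interior Ia := ⟨hs, hcon.1, hcon.2⟩
    refine hdisj s hsI ⟨hs', ?_, ?_⟩
    · rintro rfl; exact hIaA _ hsI ha'A
    · rintro rfl; exact hIaA _ hsI hb'A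
  -- An edge lying on both segments would join the ends of `Ia`, and `Ia` would be that edge alone.
  have hIbQ : ∀ e ∈ Ib.edges, e ∈ Q.edges := fun e he => by
    have hmem := (hedges e).2 (hIbe e he)
    rw [Walk.edges_append, List.mem_append] at hmem
    refine hmem.resolve_left fun heI => ?_
    induction e with | _ s t =>
    have hst : s ≠ t := (Ia.adj_of_mem_edges heI).ne
    have hs := hmid s (Ia.fst_mem_support_of_mem_edges heI) (Ib.fst_mem_support_of_mem_edges he)
    have ht := hmid t (Ia.snd_mem_support_of_mem_edges heI) (Ib.snd_mem_support_of_mem_edges he)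
    have hedge : s(a, b) ∈ Ia.edges := by
      rcases hs with rfl | rfl <;> rcases ht with rfl | rfl
      · exact absurd rfl hst
      · exact heI
      · rwa [Sym2.eq_swap]
      · exact absurd rfl hst
    have hIa' := hIap.eq_adj_toWalk_of_mem_edges hedge
    obtain ⟨hm, hna, hnb⟩ := hu₁
    rw [hIa'] at hm
    simp at hm
    tauto
  have hPQ : ∀ v ∈ P.support, v ∉ (Ia.append Q).support := fun v hv hv' =>
    hPc v hv (hsupp v hv')
  rcases exists_append_append_of_edges_subset Q hQp Ib hIbp hab' hIbQ with
    ⟨R₁, R₂, e⟩ | ⟨R₁, R₂, e⟩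
  · exact bound_of_arc hmax P Ia Q Ib R₁ R₂ e hPp hcyc hPQ hlen.symm
      (by simp [hxA, haA, hbA, ha'A, hb'A]) (by simp [hyA, haA, hbA, ha'A, hb'A])
      hu₁ hu₂ hv₁ hv₂ h₁ h₂ hu hv
  · have hrev : ∀ v ∈ interior Ib, v ∈ interior Ib.reverse := fun v hv =>
      ⟨by simpa using hv.1, hv.2.2, hv.2.1⟩
    have := bound_of_arc hmax P Ia Q Ib.reverse R₁ R₂ e hPp hcyc hPQ hlen.symm
      (by simp [hxA, haA, hbA, ha'A, hb'A]) (by simp [hyA, haA, hbA, ha'A, hb'A])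
      hu₁ hu₂ (hrev _ hv₁) (hrev _ hv₂) h₁ h₂ hu hv
    simpa using this
end Paper
end
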